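/- arXiv:2305.08463 — 3 statements merged into one kernel-verified Lean document; each statement's English description precedes it below -/
import Mathlib

section
/- (Bound of the Łojasiewicz exponent for piecewise polynomial kernels.) Assume the kernel K : ℝ^d → ℝ is of class C¹ and piecewise polynomial with maximum degree k ≥ 2: there is a finite partition {S_l}_{l=1}^L of ℝ^d into nonempty, pairwise disjoint sets and polynomial functions p_l : ℝ^d → ℝ of degree ≤ k (with degree k attained by some p_l) such that K = p_l on S_l. Let f(x) = (1/(n h^d)) Σ_{i=1}^n K((x − x_i)/h) be the KDE, let ȳ be a critical point of f (∇f(ȳ) = 0), and write {T_m}_{m=1}^M for a finite partition of ℝ^d and polynomials f_m with f = f_m on T_m; assume that for every m such that T_m intersects the ε-neighborhood of ȳ for every ε > 0, the polynomial f_m is non-constant. Then, with θ := 1 − 1/max{k(3k−4)^{d−1}, 2k(3k−3)^{d−2}}, there exist c > 0 and ε > 0 such that ‖∇f(y)‖ ≥ c·(f(ȳ) − f(y))^θ for all y with ‖ȳ − y‖ < ε and f(ȳ) − f(y) ≥ 0; i.e., the Łojasiewicz exponent of f at ȳ is at most θ. -/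
open Set Filter Topology MeasureTheory
open scoped BigOperators RealInnerProductSpace

noncomputable section

/-- Euclidean space `ℝ^d`. -/
abbrev Euc (d : ℕ) := EuclideanSpace ℝ (Fin d)

/-- The convex subdifferential of a function `g` (viewed as a function on `[0,∞)`) at `u`. -/
def subdiffIci (g : ℝ → ℝ) (u : ℝ) : Set ℝ :=
  {c : ℝ | ∀ v ∈ Set.Ici (0:ℝ), g v - g u ≥ c * (v - u)}

/-- Assumption RS: the kernel `K` is bounded, continuous, non-negative, normalized, and
radially symmetric with profile `Khat`. -/
structure AssumptionRS (d : ℕ) (K : Euc d → ℝ) (Khat : ℝ → ℝ) : Prop where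
  bounded : ∃ M : ℝ, ∀ x, K x ≤ M
  cont : Continuous K
  nonneg : ∀ x, 0 ≤ K x
  normalized : ∫ x, K x = 1
  radial : ∀ x, K x = Khat (‖x‖ ^ 2 / 2)

/-- Assumption QM for the profile `Khat`, together with the selection `Kcheck`:
`Khat` is convex and non-increasing on `[0,∞)`, its right derivative at `0` exists as a real
number and equals `-(Kcheck 0)` (i.e. `Kcheck 0 = -Khat'(0+) > -∞`), and for every `u > 0`,
`-(Kcheck u)` belongs to the subdifferential of `Khat` at `u`. -/
structure AssumptionQM (Khat Kcheck : ℝ → ℝ) : Prop where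
  convexOn : ConvexOn ℝ (Set.Ici (0:ℝ)) Khat
  antitoneOn : AntitoneOn Khat (Set.Ici (0:ℝ))
  rderiv0 : Filter.Tendsto (fun v => (Khat v - Khat 0) / v)
      (nhdsWithin 0 (Set.Ioi 0)) (nhds (-(Kcheck 0)))
  subdiff : ∀ u : ℝ, 0 < u → -(Kcheck u) ∈ subdiffIci Khat u

/-- The kernel density estimate `f(y) = (1/(n hᵈ)) ∑ᵢ K((y - xᵢ)/h)`. -/
def KDE (d n : ℕ) (K : Euc d → ℝ) (x : Fin n → Euc d) (h : ℝ) (y : Euc d) : ℝ :=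
  (1 / ((n : ℝ) * h ^ d)) * ∑ i : Fin n, K (h⁻¹ • (y - x i))

/-- `f̌(y) = (1/(n hᵈ)) ∑ᵢ Ǩ(‖(y - xᵢ)/h‖²/2)`. -/
def fcheck (d n : ℕ) (Kcheck : ℝ → ℝ) (x : Fin n → Euc d) (h : ℝ) (y : Euc d) : ℝ :=
  (1 / ((n : ℝ) * h ^ d)) * ∑ i : Fin n, Kcheck (‖h⁻¹ • (y - x i)‖ ^ 2 / 2)

/-- The mean shift vector `m(y)`: zero if `f̌(y) = 0`, and otherwise
`m(y) = ∑ᵢ Ǩ(‖(y - xᵢ)/h‖²/2)(xᵢ - y) / ∑ᵢ Ǩ(‖(y - xᵢ)/h‖²/2)`. -/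
def msMap (d n : ℕ) (Kcheck : ℝ → ℝ) (x : Fin n → Euc d) (h : ℝ) (y : Euc d) : Euc d :=
  if fcheck d n Kcheck x h y = 0 then 0
  else (∑ i : Fin n, Kcheck (‖h⁻¹ • (y - x i)‖ ^ 2 / 2))⁻¹ •
    ∑ i : Fin n, Kcheck (‖h⁻¹ • (y - x i)‖ ^ 2 / 2) • (x i - y)

/-- `y` is a mean shift iteration sequence: `y (t+1) = y t + m (y t)` for all `t`. -/
def MSSeq (d n : ℕ) (Kcheck : ℝ → ℝ) (x : Fin n → Euc d) (h : ℝ) (y : ℕ → Euc d) : Prop :=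
  ∀ t : ℕ, y (t + 1) = y t + msMap d n Kcheck x h (y t)

/-- `f` has the Łojasiewicz property on the set `S`. -/
def LojasiewiczOn (d : ℕ) (f : Euc d → ℝ) (S : Set (Euc d)) : Prop :=
  ∃ ε > (0:ℝ), ∃ c > (0:ℝ), ∃ θ ∈ Set.Ico (0:ℝ) 1,
    ∀ x' ∈ S, ∀ x ∈ S, ‖x' - x‖ < ε → 0 ≤ f x' - f x →
      ‖gradient f x‖ ≥ c * (f x' - f x) ^ θ

/-- `f` satisfies the Łojasiewicz inequality at `ybar` with exponent `θ`, on the set `S`. -/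
def LojasiewiczAtWith (d : ℕ) (f : Euc d → ℝ) (S : Set (Euc d)) (ybar : Euc d) (θ : ℝ) : Prop :=
  ∃ ε > (0:ℝ), ∃ c > (0:ℝ),
    ∀ y ∈ S, ‖ybar - y‖ < ε → 0 ≤ f ybar - f y →
      ‖gradient f y‖ ≥ c * (f ybar - f y) ^ θ

def SS (n : ℕ) (D : Fin n → ℕ) (M : ℕ) : Finset (Fin n → ℕ) :=
  (Fintype.piFinset fun _ => Finset.range (M+1)).filter (fun α => ∑ j, D j * α j ≤ M)

lemma mem_SS {n : ℕ} {D : Fin n → ℕ} (hD : ∀ j, 1 ≤ D j) {M : ℕ} {α : Fin n → ℕ} :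
    α ∈ SS n D M ↔ ∑ j, D j * α j ≤ M := by
  unfold SS
  simp only [Finset.mem_filter, Fintype.mem_piFinset, Finset.mem_range, and_iff_right_iff_imp]
  intro h j
  have h1 : D j * α j ≤ ∑ j, D j * α j :=
    Finset.single_le_sum (f := fun j => D j * α j) (fun _ _ => Nat.zero_le _) (Finset.mem_univ j)
  have h2 := hD j
  nlinarith

lemma card_SS_le {n : ℕ} (D : Fin n → ℕ) (M : ℕ) : (SS n D M).card ≤ (M+1)^n := by
  unfold SS
  refine (Finset.card_filter_le _ _).trans ?_
  simp

lemma card_SS_pos {n : ℕ} (D : Fin n → ℕ) (M : ℕ) : 1 ≤ (SS n D M).card := by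
  rw [Nat.one_le_iff_ne_zero, Finset.card_ne_zero]
  refine ⟨fun _ => 0, ?_⟩
  simp [SS]

lemma card_B_le {n : ℕ} (D : Fin n → ℕ) (hD : ∀ j, 1 ≤ D j) (m : ℕ) :
    (SS n (fun _ => 1) m).card ≤ (∏ j, D j) * (SS n D m).card := by
  have h : (SS n D m ×ˢ (Fintype.piFinset fun j => Finset.range (D j))).card
      = (∏ j, D j) * (SS n D m).card := by
    rw [Finset.card_product, Fintype.card_piFinset]; simp [mul_comm]
  rw [← h]
  apply Finset.card_le_card_of_injOn (fun β => (fun j => β j / D j, fun j => β j % D j))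
  · intro β hβ
    have hβ' := (mem_SS (D := fun _ => 1) (fun _ => le_rfl)).1 hβ
    simp only [Finset.coe_product, Set.mem_prod, Finset.mem_coe, Fintype.mem_piFinset, Finset.mem_range]
    refine ⟨(mem_SS hD).2 (le_trans (Finset.sum_le_sum fun j _ => ?_) hβ'),
      fun j => Nat.mod_lt _ (hD j)⟩
    simpa using Nat.mul_div_le (β j) (D j)
  · intro β _ β' _ hh
    simp only [Prod.mk.injEq] at hh
    funext j
    rw [← Nat.div_add_mod (β j) (D j), ← Nat.div_add_mod (β' j) (D j),
      congrFun hh.1 j, congrFun hh.2 j]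

lemma exists_M {n : ℕ} (D : Fin n → ℕ) (N c : ℕ) (hN : 1 ≤ N) :
    ∃ M, N * (SS n D (M + c)).card < (N+1) * (SS n D M).card := by
  by_contra hcon
  push Not at hcon
  set r : ℝ := ((N:ℝ)+1)/N with hr
  have hN' : (0:ℝ) < N := by exact_mod_cast hN
  have hr1 : 1 < r := by rw [hr, lt_div_iff₀ hN']; linarith
  have key : ∀ i : ℕ, r^i ≤ (SS n D (c*i)).card := by
    intro i
    induction i with
    | zero => simpa using card_SS_pos D 0
    | succ i ih =>
      have h := hcon (c*i)
      have h' : ((N:ℝ)+1) * (SS n D (c*i)).card ≤ N * (SS n D (c*i+c)).card := by exact_mod_cast h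
      rw [pow_succ, mul_add, mul_one, hr, mul_div_assoc', div_le_iff₀ hN']
      rw [hr] at ih
      nlinarith
  have key2 : ∀ i : ℕ, 1 ≤ i → r^i ≤ ((c:ℝ)+1)^n * (i:ℝ)^n := by
    intro i hi
    refine (key i).trans ?_
    have h1 := card_SS_le D (c*i)
    have h2 : ((SS n D (c*i)).card : ℝ) ≤ ((c*i:ℕ)+1:ℝ)^n := by exact_mod_cast h1
    refine h2.trans ?_
    rw [← mul_pow]
    have : (1:ℝ) ≤ i := by exact_mod_cast hi
    apply pow_le_pow_left₀ (by positivity)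
    push_cast; nlinarith
  have ht := (tendsto_pow_const_div_const_pow_of_one_lt n hr1).const_mul (((c:ℝ)+1)^n)
  rw [mul_zero] at ht
  have he := (ht.eventually (gt_mem_nhds one_pos)).and (eventually_ge_atTop 1)
  obtain ⟨i, hi1, hi2⟩ := he.exists
  have := key2 i hi2
  have hp : 0 < r^i := by positivity
  rw [mul_div_assoc', div_lt_iff₀ hp] at hi1
  linarith

lemma counting {R : Type*} [CommRing R] [Nontrivial R] {n : ℕ} (F : Fin n → MvPolynomial (Fin n) R)
    (D : Fin n → ℕ) (hD : ∀ j, 1 ≤ D j) (hF : ∀ j, (F j).totalDegree ≤ D j)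
    (g h : MvPolynomial (Fin n) R) (N : ℕ) (hN : N = ∏ j, D j) :
    ∃ A : Finset (Fin n → ℕ), ∃ c : ℕ → (Fin n → ℕ) → R,
      (∃ j ∈ Finset.range (N+1), ∃ α ∈ A, c j α ≠ 0) ∧
      ∑ j ∈ Finset.range (N+1), ∑ α ∈ A,
        MvPolynomial.C (c j α) * (g^j * h^(N-j) * ∏ i, F i ^ α i) = 0 := by
  classical
  have hN1 : 1 ≤ N := by rw [hN]; exact Nat.one_le_iff_ne_zero.2 (Finset.prod_ne_zero_iff.2 fun j _ => by have := hD j; omega)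
  set cc := N * (max g.totalDegree h.totalDegree) with hcc
  obtain ⟨M, hM⟩ := exists_M D N cc hN1
  have hcard := card_B_le D hD (M+cc)
  rw [← hN] at hcard
  let B := SS n (fun _ => 1) (M+cc)
  let ι := Fin (N+1) × (SS n D M)
  let poly : ℕ → (Fin n → ℕ) → MvPolynomial (Fin n) R := fun j α => g^j * h^(N-j) * ∏ i, F i ^ α i
  let v : ι → (B → R) := fun i b => MvPolynomial.coeff (Finsupp.equivFunOnFinite.symm b.1) (poly i.1 i.2.1)
  have hli : ¬ LinearIndependent R v := by
    intro hl
    have h1 := hl.fintype_card_le_finrank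
    rw [Module.finrank_pi] at h1
    simp only [ι, Fintype.card_prod, Fintype.card_fin, Fintype.card_coe, B] at h1
    omega
  rw [Fintype.not_linearIndependent_iff] at hli
  obtain ⟨w, hw, i0, hi0⟩ := hli
  have hdeg : ∀ j ∈ Finset.range (N+1), ∀ α ∈ SS n D M, (poly j α).totalDegree ≤ M + cc := by
    intro j hj α hα
    have hα' := (mem_SS hD).1 hα
    have h1 : (∏ i, F i ^ α i).totalDegree ≤ ∑ j, D j * α j := by
      refine (MvPolynomial.totalDegree_finsetProd _ _).trans (Finset.sum_le_sum fun i _ => ?_)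
      refine (MvPolynomial.totalDegree_pow _ _).trans ?_
      rw [mul_comm]; exact Nat.mul_le_mul_right _ (hF i)
    have h2 : (g^j * h^(N-j)).totalDegree ≤ cc := by
      refine (MvPolynomial.totalDegree_mul _ _).trans ?_
      have e1 := MvPolynomial.totalDegree_pow g j
      have e2 := MvPolynomial.totalDegree_pow h (N-j)
      have e3 : j * g.totalDegree ≤ j * max g.totalDegree h.totalDegree := Nat.mul_le_mul_left _ (le_max_left _ _)
      have e4 : (N-j) * h.totalDegree ≤ (N-j) * max g.totalDegree h.totalDegree := Nat.mul_le_mul_left _ (le_max_right _ _)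
      have e5 : j * max g.totalDegree h.totalDegree + (N-j) * max g.totalDegree h.totalDegree = cc := by
        rw [← add_mul, hcc]; congr 1; have := Finset.mem_range.1 hj; omega
      omega
    have h3 := MvPolynomial.totalDegree_mul (g^j * h^(N-j)) (∏ i, F i ^ α i)
    change (g^j * h^(N-j) * ∏ i, F i ^ α i).totalDegree ≤ _
    omega
  refine ⟨SS n D M, fun j α => if hh : j < N+1 ∧ α ∈ SS n D M then w (⟨j, hh.1⟩, ⟨α, hh.2⟩) else 0, 
    ⟨i0.1, by simp only [Finset.mem_range]; exact i0.1.2, i0.2.1, i0.2.2, by simpa using ⟨Nat.lt_succ_iff.1 i0.1.2, hi0⟩⟩, ?_⟩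
  ext β
  rw [MvPolynomial.coeff_zero, MvPolynomial.coeff_sum]
  simp_rw [MvPolynomial.coeff_sum, MvPolynomial.coeff_C_mul]
  by_cases hβ : ∑ j, β j ≤ M + cc
  · have hβB : (β : Fin n → ℕ) ∈ B := (mem_SS (fun _ => le_rfl)).2 (by simpa using hβ)
    have := congrFun hw ⟨β, hβB⟩
    simp only [Finset.sum_apply, Pi.smul_apply, smul_eq_mul, Pi.zero_apply] at this
    rw [Fintype.sum_prod_type, ] at this
    rw [← Fin.sum_univ_eq_sum_range (fun j => ∑ α ∈ SS n D M, (if hh : j < N+1 ∧ α ∈ SS n D M then w (⟨j, hh.1⟩, ⟨α, hh.2⟩) else 0) * MvPolynomial.coeff β (g^j * h^(N-j) * ∏ i, F i ^ α i))]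
    rw [← this]
    refine Finset.sum_congr rfl fun j _ => ?_
    rw [← Finset.sum_coe_sort (SS n D M)]
    refine Finset.sum_congr rfl fun α _ => ?_
    have hjj : (j:ℕ) < N+1 ∧ (α:Fin n → ℕ) ∈ SS n D M := ⟨j.2, α.2⟩
    rw [dif_pos hjj]
    simp only [v, poly]
    congr 2
    ext; simp
  · refine Finset.sum_eq_zero fun j hj => Finset.sum_eq_zero fun α hα => ?_
    have := hdeg j hj α hα
    rw [show MvPolynomial.coeff β (g^j * h^(N-j) * ∏ i, F i ^ α i) = 0 from ?_, mul_zero]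
    apply MvPolynomial.coeff_eq_zero_of_totalDegree_lt
    have e : ∑ i ∈ β.support, β i = ∑ j, β j := by
      apply Finset.sum_subset (Finset.subset_univ _)
      intro x _ hx; simpa using hx
    rw [e]
    change (poly j α).totalDegree < _
    omega

open Asymptotics in
lemma dich (l : Ultrafilter ℕ) (u v : ℕ → ℝ) : u =O[l] v ∨ v =o[l] u := by
  by_cases h : v =o[l] u
  · exact Or.inr h
  · left
    rw [isLittleO_iff] at h
    push Not at h
    obtain ⟨c, hc, h⟩ := h
    have h' := h
    refine IsBigO.of_bound c⁻¹ ?_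
    filter_upwards [h'] with i hi
    rw [inv_mul_eq_div, le_div_iff₀ hc]; linarith

def SmallP (l : Ultrafilter ℕ) (p : ℕ → ℝ) : Prop :=
  (∀ᶠ i in (l : Filter ℕ), 0 < p i) ∧ Tendsto p l (𝓝 0)

open Asymptotics in
lemma not_isLittleO_self {l : Ultrafilter ℕ} {u : ℕ → ℝ} (hu : ∀ᶠ i in (l : Filter ℕ), u i ≠ 0) :
    ¬ u =o[l] u := by
  intro h
  have := h.def (c := 1/2) (by norm_num)
  obtain ⟨i, hi, hi2⟩ := (this.and hu).exists
  have : 0 < ‖u i‖ := norm_pos_iff.2 hi2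
  linarith

open Asymptotics in
lemma two_terms {l : Ultrafilter ℕ} {ι : Type*} (s : Finset ι) (T : ι → ℕ → ℝ)
    (hs : ∀ᶠ i in (l : Filter ℕ), ∑ a ∈ s, T a i = 0) (hne : ∃ a ∈ s, ∀ᶠ i in (l : Filter ℕ), T a i ≠ 0) :
    ∃ a ∈ s, ∃ b ∈ s, a ≠ b ∧ T a =Θ[l] T b ∧ ∀ᶠ i in (l : Filter ℕ), T a i ≠ 0 := by
  classical
  obtain ⟨a0, ha0, hT0⟩ := hne
  have hmax : ∀ s' : Finset ι, s'.Nonempty → ∃ a ∈ s', ∀ᶠ i in (l : Filter ℕ), ∀ b ∈ s', |T b i| ≤ |T a i| := by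
    intro s' hs'
    have : ∀ᶠ i in (l : Filter ℕ), ∃ a ∈ (s' : Set ι), ∀ b ∈ s', |T b i| ≤ |T a i| := by
      refine Eventually.of_forall fun i => ?_
      obtain ⟨a, ha, h⟩ := Finset.exists_max_image s' (fun a => |T a i|) hs'
      exact ⟨a, ha, h⟩
    rw [Ultrafilter.eventually_exists_mem_iff s'.finite_toSet] at this
    exact this
  obtain ⟨a, ha, hamax⟩ := hmax s ⟨a0, ha0⟩
  have hane : ∀ᶠ i in (l : Filter ℕ), T a i ≠ 0 := by
    filter_upwards [hamax, hT0] with i h1 h2 h3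
    have := h1 a0 ha0
    rw [h3, abs_zero] at this
    exact h2 (abs_nonpos_iff.1 this)
  have hsum : ∀ᶠ i in (l : Filter ℕ), T a i = - ∑ b ∈ s.erase a, T b i := by
    filter_upwards [hs] with i hi
    rw [← Finset.add_sum_erase s (fun b => T b i) ha] at hi
    linarith
  have hnon : (s.erase a).Nonempty := by
    by_contra hemp
    rw [Finset.not_nonempty_iff_eq_empty] at hemp
    obtain ⟨i, h1, h2⟩ := (hsum.and hane).exists
    rw [hemp] at h1; simp at h1; exact h2 h1
  obtain ⟨b, hb, hbmax⟩ := hmax _ hnon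
  refine ⟨a, ha, b, Finset.mem_of_mem_erase hb, (Finset.ne_of_mem_erase hb).symm, ⟨?_, ?_⟩, hane⟩
  · refine IsBigO.of_bound ((s.erase a).card) ?_
    filter_upwards [hsum, hbmax] with i h1 h2
    rw [h1, norm_neg, Real.norm_eq_abs, Real.norm_eq_abs]
    refine (Finset.abs_sum_le_sum_abs _ _).trans ?_
    refine (Finset.sum_le_card_nsmul _ _ _ h2).trans ?_
    rw [nsmul_eq_mul]
  · refine IsBigO.of_bound 1 ?_
    filter_upwards [hamax] with i h1
    rw [one_mul]; exact h1 b (Finset.mem_of_mem_erase hb)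

namespace SmallP
open Asymptotics
variable {l : Ultrafilter ℕ} {p : ℕ → ℝ}

lemma ne (hp : SmallP l p) : ∀ᶠ i in (l : Filter ℕ), p i ≠ 0 := hp.1.mono fun _ h => h.ne'

lemma lt_one (hp : SmallP l p) : ∀ᶠ i in (l : Filter ℕ), p i < 1 := hp.2.eventually (gt_mem_nhds one_pos)

lemma rpow_o (hp : SmallP l p) {a b : ℝ} (h : a < b) :
    (fun i => p i ^ b) =o[l] (fun i => p i ^ a) := by
  have h1 : Tendsto (fun i => p i ^ (b-a)) l (𝓝 0) := by
    have := hp.2.rpow_const (p := b - a) (Or.inr (by linarith))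
    rwa [Real.zero_rpow (by linarith)] at this
  rw [isLittleO_iff_tendsto']
  · refine h1.congr' ?_
    filter_upwards [hp.1] with i hi
    rw [Real.rpow_sub hi]
  · filter_upwards [hp.1] with i hi h0
    exact absurd h0 (Real.rpow_pos_of_pos hi _).ne'

lemma rpow_O (hp : SmallP l p) {a b : ℝ} (h : a ≤ b) :
    (fun i => p i ^ b) =O[l] (fun i => p i ^ a) := by
  rcases h.eq_or_lt with rfl | h
  · exact isBigO_refl _ _
  · exact (hp.rpow_o h).isBigO

lemma le_of_rpow_O (hp : SmallP l p) {a b : ℝ} (h : (fun i => p i ^ a) =O[l] (fun i => p i ^ b)) :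
    b ≤ a := by
  by_contra hlt
  push Not at hlt
  have := h.trans_isLittleO (hp.rpow_o hlt)
  exact not_isLittleO_self (hp.1.mono fun i hi => (Real.rpow_pos_of_pos hi _).ne') this

lemma pow_o (hp : SmallP l p) {a b : ℕ} (h : a < b) :
    (fun i => p i ^ b) =o[l] (fun i => p i ^ a) := by
  have := hp.rpow_o (a := a) (b := b) (by exact_mod_cast h)
  simpa using this

lemma pow_O (hp : SmallP l p) {a b : ℕ} (h : a ≤ b) :
    (fun i => p i ^ b) =O[l] (fun i => p i ^ a) := by
  have := hp.rpow_O (a := a) (b := b) (by exact_mod_cast h)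
  simpa using this

lemma le_of_pow_O (hp : SmallP l p) {a b : ℕ} (h : (fun i => p i ^ a) =O[l] (fun i => p i ^ b)) :
    b ≤ a := by
  have := hp.le_of_rpow_O (a := a) (b := b) (by simpa using h)
  exact_mod_cast this

lemma pow_O_one (hp : SmallP l p) (a : ℕ) : (fun i => p i ^ a) =O[l] (fun _ => (1:ℝ)) := by
  simpa using hp.pow_O (Nat.zero_le a)

lemma eval_theta_one (hp : SmallP l p) {d : Polynomial ℝ} (hd : d.eval 0 ≠ 0) :
    (fun i => d.eval (p i)) =Θ[l] (fun _ => (1:ℝ)) := by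
  have h1 : Tendsto (fun i => d.eval (p i)) l (𝓝 (d.eval 0)) := (d.continuous.tendsto 0).comp hp.2
  have : (fun i => d.eval (p i)) =Θ[l] (fun _ => d.eval 0) := by
    apply IsEquivalent.isTheta
    exact (isEquivalent_const_iff_tendsto hd).2 h1
  refine this.trans ?_
  exact ⟨isBigO_const_const _ one_ne_zero _, isBigO_const_const _ hd _⟩

lemma factorX {γ : Polynomial ℝ} (h : γ ≠ 0) : ∃ (m : ℕ) (d : Polynomial ℝ), γ = Polynomial.X^m * d ∧ d.eval 0 ≠ 0 := by
  obtain ⟨q, hq, hnd⟩ := Polynomial.exists_eq_pow_rootMultiplicity_mul_and_not_dvd γ h 0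
  refine ⟨_, q, by simpa using hq, ?_⟩
  intro h0; exact hnd (Polynomial.dvd_iff_isRoot.2 h0)

lemma mul_theta (hp : SmallP l p) (m : ℕ) {d : Polynomial ℝ} (hd : d.eval 0 ≠ 0) :
    (fun i => (Polynomial.X^m * d).eval (p i)) =Θ[l] (fun i => p i ^ m) := by
  have := (isTheta_refl (fun i => p i ^ m) (l : Filter ℕ)).mul (hp.eval_theta_one hd)
  simpa using this

lemma poly_theta (hp : SmallP l p) {γ : Polynomial ℝ} (h : γ ≠ 0) :
    ∃ m : ℕ, (fun i => γ.eval (p i)) =Θ[l] (fun i => p i ^ m) := by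
  obtain ⟨m, d, rfl, hd⟩ := factorX h
  exact ⟨m, hp.mul_theta m hd⟩

lemma poly_deriv_theta (hp : SmallP l p) {γ : Polynomial ℝ} {a : ℕ} (ha : 1 ≤ a)
    (h : (fun i => γ.eval (p i)) =Θ[l] (fun i => p i ^ a)) :
    (fun i => γ.derivative.eval (p i)) =Θ[l] (fun i => p i ^ (a-1)) := by
  have hne : γ ≠ 0 := by
    rintro rfl
    have h1 := h.isBigO_symm
    simp only [Polynomial.eval_zero] at h1
    have h2 := isBigO_zero_right_iff.1 h1
    obtain ⟨i, hi, hi2⟩ := (h2.and hp.ne).exists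
    exact pow_ne_zero a hi2 hi
  obtain ⟨m, d, rfl, hd⟩ := factorX hne
  have h2 := (hp.mul_theta m hd).symm.trans h
  have : m = a := le_antisymm (hp.le_of_pow_O h2.isBigO_symm) (hp.le_of_pow_O h2.isBigO)
  subst this
  obtain ⟨m, rfl⟩ : ∃ k, m = k + 1 := ⟨m-1, by omega⟩
  have e : (Polynomial.X^(m+1) * d).derivative = Polynomial.X^m * (Polynomial.C ((m:ℝ)+1) * d + Polynomial.X * d.derivative) := by
    rw [Polynomial.derivative_mul, Polynomial.derivative_X_pow]; simp; ring
  rw [e]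
  refine hp.mul_theta m ?_
  simp only [Polynomial.eval_add, Polynomial.eval_mul, Polynomial.eval_C, Polynomial.eval_X, zero_mul, add_zero]
  positivity
end SmallP

open Asymptotics in
lemma theta_root {l : Ultrafilter ℕ} {τ y : ℕ → ℝ} (hτ : SmallP l τ) {e : ℕ} (he : 1 ≤ e) {E : ℝ}
    (h : (fun i => y i ^ e) =Θ[l] fun i => τ i ^ E) : y =Θ[l] fun i => τ i ^ (E / e) := by
  have h1 : (fun i => |y i| ^ (e:ℝ)) =Θ[l] fun i => τ i ^ E := by
    refine IsTheta.trans ?_ h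
    simp only [Real.rpow_natCast]
    rw [← isTheta_norm_right]
    simp only [norm_pow, Real.norm_eq_abs]
    exact isTheta_refl _ _
  have h2 := h1.rpow (r := (1/e:ℝ)) (Eventually.of_forall fun i => by simp only [Pi.zero_apply]; positivity)
    (hτ.1.mono fun i hi => by simp only [Pi.zero_apply]; positivity)
  have he' : (e:ℝ) ≠ 0 := by positivity
  have h3 : (fun i => |y i|) =Θ[l] fun i => τ i ^ (E / e) := by
    refine (EventuallyEq.trans_isTheta ?_ h2).trans_eventuallyEq ?_
    · refine Eventually.of_forall fun i => ?_
      simp only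
      rw [← Real.rpow_mul (abs_nonneg _), mul_one_div_cancel he', Real.rpow_one]
    · filter_upwards [hτ.1] with i hi
      rw [← Real.rpow_mul hi.le, mul_one_div]
  exact (isTheta_norm_left (E' := ℝ)).1 h3

open Asymptotics in
lemma theta_unique {l : Ultrafilter ℕ} {τ y : ℕ → ℝ} (hτ : SmallP l τ) {a b : ℝ}
    (h : y =Θ[l] fun i => τ i ^ a) (h' : y =Θ[l] fun i => τ i ^ b) : a = b := by
  have := h.symm.trans h'
  exact le_antisymm (hτ.le_of_rpow_O this.isBigO_symm) (hτ.le_of_rpow_O this.isBigO)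

lemma aeval_seq (p : ℕ → ℝ) (S : Polynomial ℝ) : Polynomial.aeval p S = fun i => S.eval (p i) := by
  induction S using Polynomial.induction_on' with
  | add p q hp hq => funext i; simp [hp, hq]
  | monomial n a => funext i; simp [Polynomial.aeval_monomial, Pi.algebraMap_apply]

/-- moderate sequences have algebraic order -/
def ModH (l : Ultrafilter ℕ) (τ : ℕ → ℝ) (Fld : Subalgebra ℝ (ℕ → ℝ)) (N : ℕ) : Prop :=
  ∀ y ∈ Fld, ∀ m : ℕ, (fun i => τ i ^ m) =O[l] y → (fun i => τ i ^ m * y i) =O[l] (fun _ => (1:ℝ)) →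
    ∃ e : ℕ, 1 ≤ e ∧ e ≤ N ∧ ∃ E : ℤ, (fun i => y i ^ e) =Θ[l] fun i => τ i ^ E

open Asymptotics in
lemma place {l : Ultrafilter ℕ} {τ : ℕ → ℝ} (hτ : SmallP l τ) (Fld : Subalgebra ℝ (ℕ → ℝ))
    (hinv : ∀ y ∈ Fld, y⁻¹ ∈ Fld) (hτF : τ ∈ Fld) (N : ℕ) (H : ModH l τ Fld N) :
    ∃ (e : ℕ) (π : ℕ → ℝ), 1 ≤ e ∧ e ≤ N ∧ SmallP l π ∧ τ =Θ[l] (fun i => π i ^ e) ∧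
      (∀ y ∈ Fld, ∀ m : ℕ, y =O[l] (fun _ => (1:ℝ)) → (fun i => π i ^ m) =O[l] y →
        ∃ a : ℕ, y =Θ[l] fun i => π i ^ a) ∧
      (∀ y ∈ Fld, y =O[l] (fun _ => (1:ℝ)) → ∀ K : ℕ, ∃ S : Polynomial ℝ,
        (fun i => y i - S.eval (π i)) =O[l] fun i => π i ^ K) := by
  let Γ : AddSubgroup ℝ :=
    { carrier := {q | ∃ y ∈ Fld, y =Θ[l] fun i => τ i ^ q}
      zero_mem' := ⟨1, Fld.one_mem, by simp only [Real.rpow_zero]; exact isTheta_refl _ _⟩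
      add_mem' := by
        rintro a b ⟨y, hy, h⟩ ⟨z, hz, h'⟩
        refine ⟨y * z, Fld.mul_mem hy hz, ?_⟩
        refine (h.mul h').trans_eventuallyEq ?_
        filter_upwards [hτ.1] with i hi
        rw [Real.rpow_add hi]
      neg_mem' := by
        rintro a ⟨y, hy, h⟩
        refine ⟨y⁻¹, hinv y hy, ?_⟩
        refine h.inv.trans_eventuallyEq ?_
        filter_upwards [hτ.1] with i hi
        rw [Real.rpow_neg hi.le] }
  have hΓ : ∀ q ∈ Γ, ∃ e : ℕ, 1 ≤ e ∧ e ≤ N ∧ ∃ E : ℤ, q = E / e := by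
    rintro q ⟨y, hy, h⟩
    obtain ⟨m, hm⟩ := exists_nat_ge |q|
    have hm1 : q ≤ m := (le_abs_self q).trans hm
    have hm2 : 0 ≤ m + q := by linarith [neg_abs_le q]
    obtain ⟨e, he1, he2, E, hE⟩ := H y hy m
      (by
        refine IsBigO.trans ?_ h.isBigO_symm
        simpa using hτ.rpow_O hm1)
      (by
        have h1 := (isBigO_refl (fun i => τ i ^ m) (l:Filter ℕ)).mul h.isBigO
        refine h1.trans ?_
        have h2 := hτ.rpow_O hm2
        simp only [Real.rpow_zero] at h2
        refine IsBigO.congr' h2 ?_ EventuallyEq.rfl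
        filter_upwards [hτ.1] with i hi
        rw [Real.rpow_add hi, Real.rpow_natCast])
    refine ⟨e, he1, he2, E, ?_⟩
    refine theta_unique hτ h (theta_root hτ he1 ?_)
    simpa using hE
  have hone : (1:ℝ) ∈ Γ := ⟨τ, hτF, by simp only [Real.rpow_one]; exact isTheta_refl _ _⟩
  have hfac : ∀ q ∈ Γ, ∃ k : ℤ, (N.factorial : ℝ) * q = k := by
    intro q hq
    obtain ⟨e, he1, he2, E, rfl⟩ := hΓ q hq
    obtain ⟨c, hc⟩ := Nat.dvd_factorial he1 he2
    refine ⟨c * E, ?_⟩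
    rw [hc]; push_cast
    have : (e:ℝ) ≠ 0 := by positivity
    field_simp
  have hNf : (0:ℝ) < N.factorial := by exact_mod_cast N.factorial_pos
  have hex : ∃ k : ℕ, 0 < k ∧ ((k:ℝ) / N.factorial) ∈ Γ :=
    ⟨N.factorial, N.factorial_pos, by rw [div_self hNf.ne']; exact hone⟩
  classical
  set k0 := Nat.find hex with hk0
  obtain ⟨hk0pos, hk0Γ⟩ := Nat.find_spec hex
  rw [← hk0] at hk0pos hk0Γ
  set q0 : ℝ := (k0:ℝ) / N.factorial with hq0
  have hq0pos : 0 < q0 := by positivity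
  have hmin : IsLeast {g : ℝ | g ∈ Γ ∧ 0 < g} q0 := by
    refine ⟨⟨hk0Γ, hq0pos⟩, ?_⟩
    rintro g ⟨hg, hgpos⟩
    obtain ⟨k, hk⟩ := hfac g hg
    have hkpos : 0 < k := by
      have : (0:ℝ) < k := by rw [← hk]; positivity
      exact_mod_cast this
    lift k to ℕ using hkpos.le
    have hg' : g = (k:ℝ) / N.factorial := by rw [eq_div_iff hNf.ne', mul_comm]; exact_mod_cast hk
    have : k0 ≤ k := Nat.find_min' hex ⟨by exact_mod_cast hkpos, by rw [← hg']; exact hg⟩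
    rw [hg', hq0]
    gcongr
  have hcyc := AddSubgroup.cyclic_of_min hmin
  have hmemΓ : ∀ q ∈ Γ, ∃ z : ℤ, q = z * q0 := by
    intro q hq
    rw [hcyc, AddSubgroup.mem_closure_singleton] at hq
    obtain ⟨z, hz⟩ := hq
    exact ⟨z, by rw [← hz, zsmul_eq_mul]⟩
  obtain ⟨ez, hez⟩ := hmemΓ 1 hone
  have hezpos : 0 < ez := by
    have : (0:ℝ) < ez := by by_contra hcon; push Not at hcon; nlinarith
    exact_mod_cast this
  lift ez to ℕ using hezpos.le
  have hez' : (1:ℝ) = ez * q0 := by exact_mod_cast hez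
  have heN : ez ≤ N := by
    obtain ⟨e, he1, he2, E, hE⟩ := hΓ q0 hk0Γ
    have hepos : (0:ℝ) < e := by positivity
    have hEpos : 1 ≤ E := by
      have : (0:ℝ) < E := by
        have : (E:ℝ) = q0 * e := by rw [hE]; field_simp
        rw [this]; positivity
      have : 0 < E := by exact_mod_cast this
      omega
    have hE1 : (1:ℝ) ≤ E := by exact_mod_cast hEpos
    have : (ez:ℝ) ≤ e := by
      rw [hE] at hez'
      have h3 : (e:ℝ) = ez * E := by field_simp at hez'; linarith
      rw [h3]
      nlinarith [Nat.cast_nonneg (α := ℝ) ez]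
    have : ez ≤ e := by exact_mod_cast this
    omega
  obtain ⟨y0, hy0, hy0Θ⟩ : ∃ y ∈ Fld, y =Θ[l] fun i => τ i ^ q0 := hk0Γ
  obtain ⟨π, hπF, hπΘ, hπpos⟩ : ∃ π ∈ Fld, π =Θ[l] (fun i => τ i ^ q0) ∧ ∀ᶠ i in (l:Filter ℕ), 0 < π i := by
    have hne : ∀ᶠ i in (l:Filter ℕ), y0 i ≠ 0 := by
      filter_upwards [hy0Θ.eq_zero_iff, hτ.1] with i h1 h2 h3
      exact (Real.rpow_pos_of_pos h2 q0).ne' (h1.1 h3)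
    rcases l.em (fun i => 0 < y0 i) with h | h
    · exact ⟨y0, hy0, hy0Θ, h⟩
    · refine ⟨-y0, Fld.neg_mem hy0, ?_, ?_⟩
      · exact ⟨hy0Θ.isBigO.neg_left, hy0Θ.isBigO_symm.neg_right⟩
      · filter_upwards [h, hne] with i h1 h2
        have : y0 i < 0 := lt_of_le_of_ne (not_lt.1 h1) h2
        simpa using this
  have hπ : SmallP l π := by
    refine ⟨hπpos, ?_⟩
    rw [hπΘ.tendsto_zero_iff]
    have := hτ.2.rpow_const (p := q0) (Or.inr hq0pos.le)
    rwa [Real.zero_rpow hq0pos.ne'] at this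
  have hπpow : ∀ m : ℕ, (fun i => π i ^ m) =Θ[l] fun i => τ i ^ (m * q0) := by
    intro m
    refine (hπΘ.pow m).trans_eventuallyEq ?_
    filter_upwards [hτ.1] with i hi
    rw [← Real.rpow_natCast, ← Real.rpow_mul hi.le, mul_comm]
  have hval : ∀ y ∈ Fld, ∀ m : ℕ, y =O[l] (fun _ => (1:ℝ)) → (fun i => π i ^ m) =O[l] y →
        ∃ a : ℕ, y =Θ[l] fun i => π i ^ a := by
    intro y hy m hb hlow
    obtain ⟨M, hM⟩ := exists_nat_ge (m * q0)
    obtain ⟨e, he1, he2, E, hE⟩ := H y hy M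
      (by
        refine IsBigO.trans ?_ hlow
        refine IsBigO.trans ?_ (hπpow m).isBigO_symm
        simpa using hτ.rpow_O hM)
      (by
        have := (hτ.pow_O_one M).mul hb
        simpa using this)
    have hy1 : y =Θ[l] fun i => τ i ^ ((E:ℝ)/e) := theta_root hτ he1 (by simpa using hE)
    obtain ⟨z, hz⟩ := hmemΓ _ ⟨y, hy, hy1⟩
    rw [hz] at hy1
    have hz0 : 0 ≤ z := by
      have h1 : (fun i => τ i ^ (z * q0)) =O[l] (fun i => τ i ^ (0:ℝ)) := by
        simpa using hy1.isBigO_symm.trans hb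
      have h2 := hτ.le_of_rpow_O h1
      have : (0:ℝ) ≤ z := by by_contra hcon; push Not at hcon; nlinarith
      exact_mod_cast this
    lift z to ℕ using hz0
    refine ⟨z, hy1.trans ?_⟩
    exact (hπpow z).symm
  refine ⟨ez, π, by exact_mod_cast hezpos, heN, hπ, ?_, hval, ?_⟩
  · refine IsTheta.trans ?_ (hπpow ez).symm
    rw [← hez']; simp only [Real.rpow_one]; exact isTheta_refl _ _
  · intro y hy hb K
    induction K with
    | zero => exact ⟨0, by simpa using hb⟩
    | succ K ih =>
      obtain ⟨S, hS⟩ := ih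
      have hbd := hS.bound
      obtain ⟨C, hC⟩ := hbd
      set w : ℕ → ℝ := fun i => y i - S.eval (π i) with hw
      have hmem : ∀ᶠ i in (l:Filter ℕ), w i / π i ^ K ∈ Set.Icc (-C) C := by
        filter_upwards [hC, hπ.1] with i h1 h2
        rw [Real.norm_eq_abs, Real.norm_eq_abs, abs_of_pos (by positivity : 0 < π i ^ K)] at h1
        rw [Set.mem_Icc, ← abs_le, abs_div, abs_of_pos (by positivity : 0 < π i ^ K), div_le_iff₀ (by positivity)]
        exact h1
      obtain ⟨c, -, hc⟩ := (isCompact_Icc (a := -C) (b := C)).ultrafilter_le_nhds (l.map fun i => w i / π i ^ K)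
        (by rw [le_principal_iff]; exact hmem)
      have hc' : Tendsto (fun i => w i / π i ^ K) l (𝓝 c) := hc
      have ho : (fun i => w i - c * π i ^ K) =o[l] fun i => π i ^ K := by
        rw [isLittleO_iff_tendsto' (hπ.ne.mono fun i h1 h2 => absurd h2 (pow_ne_zero _ h1))]
        have := hc'.sub_const c
        rw [sub_self] at this
        refine this.congr' ?_
        filter_upwards [hπ.ne] with i hi
        field_simp
      refine ⟨S + Polynomial.C c * Polynomial.X ^ K, ?_⟩
      have hfun : (fun i => y i - (S + Polynomial.C c * Polynomial.X ^ K).eval (π i)) = fun i => w i - c * π i ^ K := by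
        funext i; simp [hw]; ring
      rw [hfun]
      rcases dich l (fun i => w i - c * π i ^ K) (fun i => π i ^ (K+1)) with h | h
      · exact h
      · have hF : (fun i => w i - c * π i ^ K) ∈ Fld := by
          rw [← hfun]
          have e : (fun i => y i - (S + Polynomial.C c * Polynomial.X ^ K).eval (π i))
             = y - Polynomial.aeval π (S + Polynomial.C c * Polynomial.X ^ K) := by rw [aeval_seq]; rfl
          rw [e]
          refine Fld.sub_mem hy ?_
          have h5 := (Polynomial.aeval (⟨π, hπF⟩ : Fld) (S + Polynomial.C c * Polynomial.X ^ K)).2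
          rwa [Polynomial.aeval_subalgebra_coe] at h5
        obtain ⟨j, hj⟩ := hval _ hF (K+1) (ho.isBigO.trans (hπ.pow_O_one K)) h.isBigO
        have : K + 1 ≤ j := by
          by_contra hcon
          have h1 : (fun i => π i ^ K) =O[l] (fun i => π i ^ j) := hπ.pow_O (by omega)
          have h2 := (h1.trans hj.isBigO_symm).trans_isLittleO ho
          exact not_isLittleO_self (hπ.ne.mono fun i h => pow_ne_zero _ h) h2
        exact hj.isBigO.trans (hπ.pow_O this)

/-- sequences that are eventually quotients of evaluations -/
def FldOf {P : Type*} [CommRing P] [Algebra ℝ P] (l : Ultrafilter ℕ) (ev : ℕ → P →ₐ[ℝ] ℝ) :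
    Subalgebra ℝ (ℕ → ℝ) where
  carrier := {y | ∃ g h : P, ∀ᶠ i in (l : Filter ℕ), ev i h ≠ 0 ∧ y i * ev i h = ev i g}
  mul_mem' := by
    rintro a b ⟨g, h, H⟩ ⟨g', h', H'⟩
    refine ⟨g * g', h * h', ?_⟩
    filter_upwards [H, H'] with i h1 h2
    refine ⟨by rw [map_mul]; exact mul_ne_zero h1.1 h2.1, ?_⟩
    rw [map_mul, map_mul, Pi.mul_apply, ← h1.2, ← h2.2]; ring
  add_mem' := by
    rintro a b ⟨g, h, H⟩ ⟨g', h', H'⟩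
    refine ⟨g * h' + g' * h, h * h', ?_⟩
    filter_upwards [H, H'] with i h1 h2
    refine ⟨by rw [map_mul]; exact mul_ne_zero h1.1 h2.1, ?_⟩
    rw [map_mul, map_add, map_mul, map_mul, Pi.add_apply, ← h1.2, ← h2.2]; ring
  algebraMap_mem' := by
    intro r
    refine ⟨algebraMap ℝ P r, 1, Eventually.of_forall fun i => ?_⟩
    simp

lemma FldOf_inv {P : Type*} [CommRing P] [Algebra ℝ P] (l : Ultrafilter ℕ) (ev : ℕ → P →ₐ[ℝ] ℝ) :
    ∀ y ∈ FldOf l ev, y⁻¹ ∈ FldOf l ev := by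
  rintro y ⟨g, h, H⟩
  rcases l.em (fun i => ev i g ≠ 0) with hg | hg
  · refine ⟨h, g, ?_⟩
    filter_upwards [H, hg] with i h1 h2
    refine ⟨h2, ?_⟩
    have : y i ≠ 0 := by intro h0; rw [← h1.2, h0, zero_mul] at h2; exact h2 rfl
    rw [Pi.inv_apply, ← h1.2]; field_simp
  · refine ⟨0, 1, ?_⟩
    filter_upwards [H, hg] with i h1 h2
    push Not at h2
    have : y i = 0 := by rw [← h1.2] at h2; exact (mul_eq_zero.1 h2).resolve_right h1.1
    simp [this]

lemma FldOf_mem {P : Type*} [CommRing P] [Algebra ℝ P] (l : Ultrafilter ℕ) (ev : ℕ → P →ₐ[ℝ] ℝ)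
    (p : P) : (fun i => ev i p) ∈ FldOf l ev :=
  ⟨p, 1, Eventually.of_forall fun i => by simp⟩

open Asymptotics in
lemma final_exp {l : Ultrafilter ℕ} {τ y : ℕ → ℝ} (hτ : SmallP l τ) (hy : ∀ᶠ i in (l:Filter ℕ), y i ≠ 0)
    {j j' a a' N : ℕ} (hj : j ≤ N) (hj' : j' ≤ N) (hne : j ≠ j')
    (h : (fun i => y i ^ j * τ i ^ a) =Θ[l] fun i => y i ^ j' * τ i ^ a') :
    ∃ e : ℕ, 1 ≤ e ∧ e ≤ N ∧ ∃ E : ℤ, (fun i => y i ^ e) =Θ[l] fun i => τ i ^ E := by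
  have main : ∀ {j j' a a' : ℕ}, j < j' → j' ≤ N → (fun i => y i ^ j * τ i ^ a) =Θ[l] (fun i => y i ^ j' * τ i ^ a') →
    ∃ e : ℕ, 1 ≤ e ∧ e ≤ N ∧ ∃ E : ℤ, (fun i => y i ^ e) =Θ[l] fun i => τ i ^ E := by
    intro j j' a a' hlt hle h
    refine ⟨j' - j, by omega, by omega, (a:ℤ) - a', ?_⟩
    have h1 := (h.div (isTheta_refl (fun i => y i ^ j * τ i ^ a') (l:Filter ℕ))).symm
    refine (EventuallyEq.trans_isTheta ?_ h1).trans_eventuallyEq ?_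
    · filter_upwards [hy, hτ.1] with i h1 h2
      obtain ⟨k, rfl⟩ := Nat.exists_eq_add_of_lt hlt
      rw [show j + k + 1 - j = k + 1 by omega, show j + k + 1 = j + (k+1) by omega, pow_add]
      field_simp
      ring
    · filter_upwards [hy, hτ.1] with i h1 h2
      rw [zpow_sub₀ h2.ne', zpow_natCast, zpow_natCast]
      field_simp
  rcases lt_or_gt_of_ne hne with h1 | h1
  · exact main h1 hj' h
  · exact main h1 hj h.symm

lemma poly_gap {n : ℕ} (α α' : Fin n → ℕ) (hne : α ≠ α') (B : ℕ) :
    ∀ᶠ i : ℕ in atTop, (∑ k, α' k * i^((k:ℕ)+1)) + B ≤ (∑ k, α k * i^((k:ℕ)+1)) ∨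
       (∑ k, α k * i^((k:ℕ)+1)) + B ≤ (∑ k, α' k * i^((k:ℕ)+1)) := by
  let Q : Polynomial ℝ := ∑ k : Fin n, Polynomial.C ((α k:ℝ) - α' k) * Polynomial.X ^ ((k:ℕ)+1)
  obtain ⟨k, hk⟩ := Function.ne_iff.1 hne
  have hc : Q.coeff ((k:ℕ)+1) = (α k:ℝ) - α' k := by
    simp only [Q, Polynomial.finsetSum_coeff, Polynomial.coeff_C_mul, Polynomial.coeff_X_pow]
    rw [Finset.sum_eq_single k]
    · simp
    · intro b _ hb
      have : ¬ ((k:ℕ) + 1 = (b:ℕ)+1) := by intro h; apply hb; ext; omega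
      rw [if_neg this, mul_zero]
    · simp
  have hd : 0 < Q.degree := by
    have h1 : Q.coeff ((k:ℕ)+1) ≠ 0 := by
      rw [hc, sub_ne_zero]; exact_mod_cast hk
    have := Polynomial.le_degree_of_ne_zero h1
    refine lt_of_lt_of_le ?_ this
    exact_mod_cast Nat.succ_pos _
  have ht := (Polynomial.abs_tendsto_atTop Q hd).comp tendsto_natCast_atTop_atTop (α := ℕ)
  filter_upwards [ht.eventually_ge_atTop (B:ℝ)] with i hi
  have he : Q.eval (i:ℝ) = ((∑ k, α k * i^((k:ℕ)+1) : ℕ) : ℝ) - ((∑ k, α' k * i^((k:ℕ)+1) : ℕ) : ℝ) := by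
    simp only [Q, Polynomial.eval_finsetSum]
    push_cast
    rw [← Finset.sum_sub_distrib]
    refine Finset.sum_congr rfl fun k _ => ?_
    simp; ring
  simp only [Function.comp] at hi
  rw [he, le_abs] at hi
  rcases hi with hi | hi
  · left
    have : ((∑ k, α' k * i^((k:ℕ)+1) : ℕ) : ℝ) + B ≤ ((∑ k, α k * i^((k:ℕ)+1) : ℕ) : ℝ) := by linarith
    exact_mod_cast this
  · right
    have : ((∑ k, α k * i^((k:ℕ)+1) : ℕ) : ℝ) + B ≤ ((∑ k, α' k * i^((k:ℕ)+1) : ℕ) : ℝ) := by linarith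
    exact_mod_cast this

open Asymptotics in
lemma gap_contra {l : Ultrafilter ℕ} {τ y : ℕ → ℝ} (hτ : SmallP l τ) {m : ℕ}
    (hlow : (fun i => τ i ^ m) =O[l] y) (hup : (fun i => τ i ^ m * y i) =O[l] (fun _ => (1:ℝ)))
    {a a' j j' : ℕ} {A A' : ℕ → ℕ}
    (h : (fun i => τ i ^ a' * y i ^ j' * τ i ^ (A' i)) =O[l] (fun i => τ i ^ a * y i ^ j * τ i ^ (A i))) :
    ¬ ∀ᶠ i in (l:Filter ℕ), A' i + (m*j + a' + m*j' + 1) ≤ A i := by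
  intro hA
  have h1 : (fun i => τ i ^ (m*j + a' + m*j') * τ i ^ (A' i)) =O[l]
      (fun i => τ i ^ (m*j) * (τ i ^ a' * y i ^ j' * τ i ^ (A' i))) := by
    have := ((isBigO_refl (fun i => τ i ^ (m*j) * τ i ^ a') (l:Filter ℕ)).mul (hlow.pow j')).mul
      (isBigO_refl (fun i => τ i ^ (A' i)) (l:Filter ℕ))
    refine this.congr (fun i => ?_) (fun i => ?_)
    · rw [pow_add, pow_add, pow_mul _ m j']
    · ring
  have h2 := h1.trans ((isBigO_refl (fun i => τ i ^ (m*j)) (l:Filter ℕ)).mul h)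
  have h3 : (fun i => τ i ^ (m*j) * (τ i ^ a * y i ^ j * τ i ^ (A i))) =O[l] fun i => τ i ^ (A i) := by
    have := ((hup.pow j).mul (hτ.pow_O_one a)).mul (isBigO_refl (fun i => τ i ^ (A i)) (l:Filter ℕ))
    refine this.congr (fun i => ?_) (fun i => ?_)
    · rw [mul_pow, pow_mul]; ring
    · simp
  have h4 : (fun i => τ i ^ (A i)) =O[l] fun i => τ i ^ (m*j + a' + m*j' + 1) * τ i ^ (A' i) := by
    refine IsBigO.of_bound 1 ?_
    filter_upwards [hA, hτ.1, hτ.lt_one] with i h1 h2 h3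
    rw [one_mul, Real.norm_of_nonneg (by positivity), Real.norm_of_nonneg (by positivity), ← pow_add]
    exact pow_le_pow_of_le_one h2.le h3.le (by omega)
  have h5 := (h2.trans h3).trans h4
  have h6 : (fun i => τ i ^ (m*j + a' + m*j')) =O[l] fun i => τ i ^ (m*j + a' + m*j' + 1) := by
    have := h5.mul (isBigO_refl (fun i => (τ i ^ (A' i))⁻¹) (l:Filter ℕ))
    refine this.congr' ?_ ?_
    · filter_upwards [hτ.1] with i h2
      field_simp
    · filter_upwards [hτ.1] with i h2
      field_simp
  have := hτ.le_of_pow_O h6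
  omega

/-- evaluation of polynomials with coefficients in ℝ[u] -/
def evU (n : ℕ) (t : ℝ) (x : Fin n → ℝ) : MvPolynomial (Fin n) (Polynomial ℝ) →ₐ[ℝ] ℝ :=
  { MvPolynomial.eval₂Hom (Polynomial.evalRingHom t) x with
    commutes' := by
      intro r
      have : algebraMap ℝ (MvPolynomial (Fin n) (Polynomial ℝ)) r = MvPolynomial.C (Polynomial.C r) := rfl
      rw [this]
      change MvPolynomial.eval₂Hom (Polynomial.evalRingHom t) x (MvPolynomial.C (Polynomial.C r)) = r
      simp }

lemma evU_C (n : ℕ) (t : ℝ) (x : Fin n → ℝ) (c : Polynomial ℝ) : evU n t x (MvPolynomial.C c) = c.eval t := by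
  change MvPolynomial.eval₂Hom (Polynomial.evalRingHom t) x (MvPolynomial.C c) = _
  simp

lemma evU_X (n : ℕ) (t : ℝ) (x : Fin n → ℝ) (j : Fin n) : evU n t x (MvPolynomial.X j) = x j := by
  change MvPolynomial.eval₂Hom (Polynomial.evalRingHom t) x (MvPolynomial.X j) = _
  simp

lemma evU_map (n : ℕ) (t : ℝ) (x : Fin n → ℝ) (p : MvPolynomial (Fin n) ℝ) :
    evU n t x (MvPolynomial.map Polynomial.C p) = MvPolynomial.eval x p := by
  change MvPolynomial.eval₂Hom (Polynomial.evalRingHom t) x (MvPolynomial.map Polynomial.C p) = _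
  rw [MvPolynomial.coe_eval₂Hom, MvPolynomial.eval₂_map]
  have : (Polynomial.evalRingHom t).comp Polynomial.C = RingHom.id ℝ := by ext; simp
  rw [this]; rfl

open Asymptotics in
lemma modH_generic {l : Ultrafilter ℕ} (hl : (l:Filter ℕ) ≤ atTop) {τ : ℕ → ℝ} (hτ : SmallP l τ) {n : ℕ}
    (F : Fin n → MvPolynomial (Fin n) (Polynomial ℝ)) (D : ℕ) (hD : 1 ≤ D) (hF : ∀ j, (F j).totalDegree ≤ D)
    (x : ℕ → Fin n → ℝ)
    (hFx : ∀ᶠ i in (l:Filter ℕ), ∀ j, evU n (τ i) (x i) (F j) = τ i ^ (i ^ ((j:ℕ)+1))) :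
    ModH l τ (FldOf l (fun i => evU n (τ i) (x i))) (D^n) := by
  classical
  rintro y ⟨g, h, hgh⟩ m hlow hup
  obtain ⟨A, c, ⟨j0, hj0, α0, hα0, hc0⟩, hsum⟩ := counting F (fun _ => D) (fun _ => hD) hF g h (D^n) (by simp)
  have hyne : ∀ᶠ i in (l:Filter ℕ), y i ≠ 0 := by
    filter_upwards [hlow.eq_zero_imp, hτ.ne] with i h1 h2 h3
    exact pow_ne_zero m h2 (h1 h3)
  let T : ℕ × (Fin n → ℕ) → ℕ → ℝ := fun a i =>
    (c a.1 a.2).eval (τ i) * y i ^ a.1 * τ i ^ (∑ k, a.2 k * i^((k:ℕ)+1))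
  have hTsum : ∀ᶠ i in (l:Filter ℕ), ∑ a ∈ Finset.range (D^n+1) ×ˢ A, T a i = 0 := by
    filter_upwards [hgh, hFx] with i h1 h2
    have h3 := congrArg (evU n (τ i) (x i)) hsum
    rw [map_zero, map_sum] at h3
    simp only [map_sum, map_mul, map_pow, map_prod, evU_C, h2, ← h1.2] at h3
    rw [Finset.sum_product]
    have h4 : (∑ j ∈ Finset.range (D^n+1), ∑ α ∈ A, T (j, α) i) * (evU n (τ i) (x i) h)^(D^n) = 0 := by
      rw [← h3, Finset.sum_mul]
      refine Finset.sum_congr rfl fun j hj => ?_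
      rw [Finset.sum_mul]
      refine Finset.sum_congr rfl fun α hα => ?_
      have hj' : j ≤ D^n := Nat.lt_succ_iff.1 (Finset.mem_range.1 hj)
      have e1 : (evU n (τ i) (x i) h)^(D^n) = (evU n (τ i) (x i) h)^j * (evU n (τ i) (x i) h)^(D^n-j) := by
        rw [← pow_add]; congr 1; omega
      have e2 : τ i ^ (∑ k : Fin n, α k * i^((k:ℕ)+1)) = ∏ k : Fin n, (τ i ^ i^((k:ℕ)+1))^(α k) := by
        rw [← Finset.prod_pow_eq_pow_sum]
        refine Finset.prod_congr rfl fun k _ => ?_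
        rw [← pow_mul, mul_comm]
      simp only [T]
      rw [e1, e2, mul_pow]; ring
    exact (mul_eq_zero.1 h4).resolve_right (pow_ne_zero _ h1.1)
  have hcne : ∀ p : Polynomial ℝ, p ≠ 0 → ∀ᶠ i in (l:Filter ℕ), p.eval (τ i) ≠ 0 := by
    intro p hp
    obtain ⟨q, hq⟩ := hτ.poly_theta hp
    filter_upwards [hq.eq_zero_iff, hτ.ne] with i h1 h2 h3
    exact pow_ne_zero q h2 (h1.1 h3)
  obtain ⟨⟨j, α⟩, ha, ⟨j', α'⟩, hb, hab, hΘ, hTne⟩ := two_terms _ T hTsum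
    ⟨(j0, α0), Finset.mk_mem_product hj0 hα0, by
      filter_upwards [hcne _ hc0, hyne, hτ.ne] with i h1 h2 h3
      simp only [T]
      exact mul_ne_zero (mul_ne_zero h1 (pow_ne_zero _ h2)) (pow_ne_zero _ h3)⟩
  have hTne' : ∀ᶠ i in (l:Filter ℕ), T (j', α') i ≠ 0 := by
    filter_upwards [hΘ.eq_zero_iff, hTne] with i h1 h2 h3
    exact h2 (h1.2 h3)
  have hc1 : c j α ≠ 0 := by
    intro h0
    obtain ⟨i, hi⟩ := hTne.exists
    exact hi (by simp [T, h0])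
  have hc2 : c j' α' ≠ 0 := by
    intro h0
    obtain ⟨i, hi⟩ := hTne'.exists
    exact hi (by simp [T, h0])
  obtain ⟨a, ha1⟩ := hτ.poly_theta hc1
  obtain ⟨a', ha2⟩ := hτ.poly_theta hc2
  have hT1 : T (j, α) =Θ[l] fun i => τ i ^ a * y i ^ j * τ i ^ (∑ k, α k * i^((k:ℕ)+1)) :=
    (ha1.mul (isTheta_refl _ _)).mul (isTheta_refl _ _)
  have hT2 : T (j', α') =Θ[l] fun i => τ i ^ a' * y i ^ j' * τ i ^ (∑ k, α' k * i^((k:ℕ)+1)) :=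
    (ha2.mul (isTheta_refl _ _)).mul (isTheta_refl _ _)
  have hΘ' := (hT1.symm.trans hΘ).trans hT2
  have hαα : α = α' := by
    by_contra hne
    have g1 := gap_contra hτ hlow hup hΘ'.isBigO_symm
    have g2 := gap_contra hτ hlow hup hΘ'.isBigO
    have hg := (poly_gap α α' hne ((m*j + a' + m*j' + 1) + (m*j' + a + m*j + 1))).filter_mono hl
    rcases Ultrafilter.eventually_or.1 hg with hg | hg
    · exact g1 (hg.mono fun i hi => by omega)
    · exact g2 (hg.mono fun i hi => by omega)
  subst hαα
  have hjj : j ≠ j' := fun h => hab (by rw [h])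
  refine final_exp hτ hyne (Nat.lt_succ_iff.1 (Finset.mem_range.1 (Finset.mem_product.1 ha).1))
    (Nat.lt_succ_iff.1 (Finset.mem_range.1 (Finset.mem_product.1 hb).1)) hjj (a := a) (a' := a') ?_
  have h1 := hΘ'.mul (isTheta_refl (fun i => (τ i ^ (∑ k, α k * i^((k:ℕ)+1)))⁻¹) (l:Filter ℕ))
  refine (EventuallyEq.trans_isTheta ?_ h1).trans_eventuallyEq ?_
  · filter_upwards [hτ.1] with i h2
    field_simp
  · filter_upwards [hτ.1] with i h2
    field_simp

open Asymptotics in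
lemma modH_two {l : Ultrafilter ℕ} {τ : ℕ → ℝ} (hτ : SmallP l τ)
    (f Q : MvPolynomial (Fin 2) ℝ) (d1 d2 : ℕ) (hd1 : 1 ≤ d1) (hd2 : 1 ≤ d2) (hf : f.totalDegree ≤ d1)
    (hQ : Q.totalDegree ≤ d2) (hQ0 : Q ≠ 0)
    (x : ℕ → Fin 2 → ℝ)
    (hfx : ∀ᶠ i in (l:Filter ℕ), MvPolynomial.eval (x i) f = τ i)
    (hQx : ∀ᶠ i in (l:Filter ℕ), MvPolynomial.eval (x i) Q = 0) :
    ModH l τ (FldOf l (fun i => MvPolynomial.aeval (x i))) (d1 * d2) := by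
  classical
  rintro y ⟨g, h, hgh⟩ m hlow hup
  replace hgh : ∀ᶠ i in (l:Filter ℕ), MvPolynomial.eval (x i) h ≠ 0 ∧ y i * MvPolynomial.eval (x i) h = MvPolynomial.eval (x i) g := hgh
  obtain ⟨A, c, ⟨j0, hj0, α0, hα0, hc0⟩, hsum⟩ := counting ![f, Q] ![d1, d2]
    (fun j => by fin_cases j <;> simpa) (fun j => by fin_cases j <;> simpa) g h (d1*d2) (by simp)
  set N := d1 * d2
  have hyne : ∀ᶠ i in (l:Filter ℕ), y i ≠ 0 := by
    filter_upwards [hlow.eq_zero_imp, hτ.ne] with i h1 h2 h3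
    exact pow_ne_zero m h2 (h1 h3)
  have hex : ∃ m0, ∃ j ∈ Finset.range (N+1), ∃ α ∈ A, c j α ≠ 0 ∧ α 1 = m0 := ⟨α0 1, j0, hj0, α0, hα0, hc0, rfl⟩
  set m0 := Nat.find hex
  obtain ⟨j1, hj1, α1, hα1, hc1, hm1⟩ := Nat.find_spec hex
  have hmin : ∀ j ∈ Finset.range (N+1), ∀ α ∈ A, c j α ≠ 0 → m0 ≤ α 1 :=
    fun j hj α hα hc => Nat.find_min' hex ⟨j, hj, α, hα, hc, rfl⟩
  let T : ℕ × (Fin 2 → ℕ) → ℕ → ℝ := fun a i => if a.2 1 = m0 then c a.1 a.2 * (y i ^ a.1 * τ i ^ (a.2 0)) else 0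
  have hsum2 : ∑ j ∈ Finset.range (N+1), ∑ α ∈ A,
        MvPolynomial.C (c j α) * (g^j * h^(N-j) * (f ^ α 0 * Q ^ (α 1 - m0))) = 0 := by
    have : (∑ j ∈ Finset.range (N+1), ∑ α ∈ A,
        MvPolynomial.C (c j α) * (g^j * h^(N-j) * (f ^ α 0 * Q ^ (α 1 - m0)))) * Q ^ m0 = 0 := by
      rw [← hsum, Finset.sum_mul]
      refine Finset.sum_congr rfl fun j hj => ?_
      rw [Finset.sum_mul]
      refine Finset.sum_congr rfl fun α hα => ?_
      by_cases hc : c j α = 0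
      · simp [hc]
      · have hm := hmin j hj α hα hc
        rw [Fin.prod_univ_two]
        simp only [Matrix.cons_val_zero, Matrix.cons_val_one]
        have : Q ^ (α 1) = Q ^ (α 1 - m0) * Q ^ m0 := by rw [← pow_add]; congr 1; omega
        rw [this]; ring
    exact (mul_eq_zero.1 this).resolve_right (pow_ne_zero _ hQ0)
  have hTsum : ∀ᶠ i in (l:Filter ℕ), ∑ a ∈ Finset.range (N+1) ×ˢ A, T a i = 0 := by
    filter_upwards [hgh, hfx, hQx] with i h1 h2 h2'
    have h3 := congrArg (MvPolynomial.eval (x i)) hsum2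
    rw [map_zero, map_sum] at h3
    simp only [map_sum, map_mul, map_pow, MvPolynomial.eval_C, h2, h2', ← h1.2] at h3
    rw [Finset.sum_product]
    have h4 : (∑ j ∈ Finset.range (N+1), ∑ α ∈ A, T (j, α) i) * (MvPolynomial.eval (x i) h)^N = 0 := by
      rw [← h3, Finset.sum_mul]
      refine Finset.sum_congr rfl fun j hj => ?_
      rw [Finset.sum_mul]
      refine Finset.sum_congr rfl fun α hα => ?_
      have hj' : j ≤ N := Nat.lt_succ_iff.1 (Finset.mem_range.1 hj)
      have e1 : (MvPolynomial.eval (x i) h)^N = (MvPolynomial.eval (x i) h)^j * (MvPolynomial.eval (x i) h)^(N-j) := by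
        rw [← pow_add]; congr 1; omega
      simp only [T]
      by_cases hα1 : α 1 = m0
      · rw [if_pos hα1, e1, hα1, mul_pow]; simp; ring
      · rw [if_neg hα1]
        by_cases hc : c j α = 0
        · simp [hc]
        · have hm := hmin j hj α hα hc
          rw [zero_pow (by omega : α 1 - m0 ≠ 0)]; ring
    exact (mul_eq_zero.1 h4).resolve_right (pow_ne_zero _ h1.1)
  obtain ⟨⟨j, α⟩, ha, ⟨j', α'⟩, hb, hab, hΘ, hTne⟩ := two_terms _ T hTsum
    ⟨(j1, α1), Finset.mk_mem_product hj1 hα1, by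
      filter_upwards [hyne, hτ.ne] with i h2 h3
      simp only [T]
      rw [if_pos hm1]
      exact mul_ne_zero hc1 (mul_ne_zero (pow_ne_zero _ h2) (pow_ne_zero _ h3))⟩
  have hTne' : ∀ᶠ i in (l:Filter ℕ), T (j', α') i ≠ 0 := by
    filter_upwards [hΘ.eq_zero_iff, hTne] with i h1 h2 h3
    exact h2 (h1.2 h3)
  have key : ∀ j α, (∀ᶠ i in (l:Filter ℕ), T (j, α) i ≠ 0) → α 1 = m0 ∧ T (j, α) =Θ[l] fun i => y i ^ j * τ i ^ (α 0) := by
    intro j α hT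
    have h1 : α 1 = m0 ∧ c j α ≠ 0 := by
      obtain ⟨i, hi⟩ := hT.exists
      simp only [T] at hi
      split_ifs at hi with h0
      · exact ⟨h0, left_ne_zero_of_mul hi⟩
      · exact absurd rfl hi
    refine ⟨h1.1, ?_⟩
    simp only [T, if_pos h1.1]
    exact (isTheta_const_mul_left h1.2).2 (isTheta_refl _ _)
  obtain ⟨k1, k2⟩ := key j α hTne
  obtain ⟨k1', k2'⟩ := key j' α' hTne'
  have hΘ' := (k2.symm.trans hΘ).trans k2'
  have hjj : j ≠ j' := by
    rintro rfl
    apply hab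
    have h1 := hΘ'.mul (isTheta_refl (fun i => (y i ^ j)⁻¹) (l:Filter ℕ))
    have h2 : (fun i => τ i ^ (α 0)) =Θ[l] fun i => τ i ^ (α' 0) := by
      refine (EventuallyEq.trans_isTheta ?_ h1).trans_eventuallyEq ?_
      · filter_upwards [hyne] with i h2
        field_simp
      · filter_upwards [hyne] with i h2
        field_simp
    have h3 := le_antisymm (hτ.le_of_pow_O h2.isBigO_symm) (hτ.le_of_pow_O h2.isBigO)
    congr 1
    funext q
    fin_cases q
    · exact h3
    · exact k1.trans k1'.symm
  exact final_exp hτ hyne (Nat.lt_succ_iff.1 (Finset.mem_range.1 (Finset.mem_product.1 ha).1))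
    (Nat.lt_succ_iff.1 (Finset.mem_range.1 (Finset.mem_product.1 hb).1)) hjj hΘ'

lemma totalDegree_pderiv_le' {n : ℕ} (j : Fin n) (p : MvPolynomial (Fin n) ℝ) :
    (MvPolynomial.pderiv j p).totalDegree ≤ p.totalDegree - 1 := by
  classical
  rw [MvPolynomial.totalDegree]
  refine Finset.sup_le fun s hs => ?_
  rw [MvPolynomial.mem_support_iff, MvPolynomial.coeff_pderiv] at hs
  have h1 : (s + Finsupp.single j 1) ∈ p.support := by
    rw [MvPolynomial.mem_support_iff]; intro h0; rw [h0] at hs; simp at hs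
  have h2 := MvPolynomial.le_totalDegree h1
  have h3 : (s + Finsupp.single j 1).sum (fun _ e => e) = s.sum (fun _ e => e) + 1 := by
    rw [Finsupp.sum_add_index' (by simp) (by simp)]; simp
  omega

lemma chain_rule {n : ℕ} {A : Type*} [CommRing A] [Algebra ℝ A] (D : Derivation ℝ A A) (φ : Fin n → A)
    (p : MvPolynomial (Fin n) ℝ) :
    D (MvPolynomial.aeval φ p) = ∑ j, MvPolynomial.aeval φ (MvPolynomial.pderiv j p) * D (φ j) := by
  classical
  induction p using MvPolynomial.induction_on with
  | C a => simp [MvPolynomial.algebraMap_eq]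
  | add p q hp hq => simp only [map_add, hp, hq, add_mul, Finset.sum_add_distrib]
  | mul_X p i hp =>
    simp only [map_mul, Derivation.leibniz, hp, smul_eq_mul, MvPolynomial.aeval_X, MvPolynomial.pderiv_X, map_add, add_mul, Finset.sum_add_distrib, Finset.mul_sum]
    congr 1
    · rw [Finset.sum_eq_single i]
      · simp
      · intro b _ hb; simp [Pi.single_apply, hb.symm]
      · simp
    · refine Finset.sum_congr rfl fun j _ => by ring

lemma totalDegree_aeval_le {m n : ℕ} (φ : Fin n → MvPolynomial (Fin m) ℝ) (hφ : ∀ j, (φ j).totalDegree ≤ 1)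
    (p : MvPolynomial (Fin n) ℝ) : (MvPolynomial.aeval φ p).totalDegree ≤ p.totalDegree := by
  rw [MvPolynomial.aeval_def, MvPolynomial.eval₂_eq']
  refine MvPolynomial.totalDegree_finsetSum_le fun s hs => ?_
  refine (MvPolynomial.totalDegree_mul _ _).trans ?_
  rw [MvPolynomial.algebraMap_eq, MvPolynomial.totalDegree_C, zero_add]
  refine (MvPolynomial.totalDegree_finsetProd _ _).trans ?_
  refine le_trans ?_ (MvPolynomial.le_totalDegree hs)
  rw [Finsupp.sum_fintype _ _ (by simp)]
  refine Finset.sum_le_sum fun i _ => ?_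
  refine (MvPolynomial.totalDegree_pow _ _).trans ?_
  have := hφ i
  nlinarith

def gsq {n : ℕ} (f : MvPolynomial (Fin n) ℝ) : MvPolynomial (Fin n) ℝ := ∑ j, (MvPolynomial.pderiv j f)^2

lemma eval_gsq {n : ℕ} (f : MvPolynomial (Fin n) ℝ) (x : Fin n → ℝ) :
    MvPolynomial.eval x (gsq f) = ∑ j, (MvPolynomial.eval x (MvPolynomial.pderiv j f))^2 := by
  simp [gsq]

lemma gsq_nonneg {n : ℕ} (f : MvPolynomial (Fin n) ℝ) (x : Fin n → ℝ) : 0 ≤ MvPolynomial.eval x (gsq f) := by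
  rw [eval_gsq]; positivity

lemma totalDegree_gsq_le {n k : ℕ} (f : MvPolynomial (Fin n) ℝ) (hf : f.totalDegree ≤ k) :
    (gsq f).totalDegree ≤ 2 * k - 2 := by
  refine MvPolynomial.totalDegree_finsetSum_le fun j _ => ?_
  refine (MvPolynomial.totalDegree_pow _ _).trans ?_
  have := totalDegree_pderiv_le' j f
  omega

lemma hasFDerivAt_eval {n : ℕ} (p : MvPolynomial (Fin n) ℝ) (x : Fin n → ℝ) :
    HasFDerivAt (fun x => MvPolynomial.eval x p)
      (∑ j, MvPolynomial.eval x (MvPolynomial.pderiv j p) • ContinuousLinearMap.proj (R := ℝ) (φ := fun _ : Fin n => ℝ) j) x := by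
  classical
  induction p using MvPolynomial.induction_on with
  | C a => simpa using hasFDerivAt_const a x
  | add p q hp hq =>
    have h1 := hp.add hq
    simp only [map_add, add_smul, Finset.sum_add_distrib]
    exact h1
  | mul_X p i hp =>
    have h1 := hp.mul (ContinuousLinearMap.proj (R := ℝ) (φ := fun _ : Fin n => ℝ) i).hasFDerivAt (x := x)
    have h2 : (fun x => MvPolynomial.eval x (p * MvPolynomial.X i)) = fun x => (MvPolynomial.eval x p) * (x i) := by
      funext x; simp
    rw [h2]
    refine h1.congr_fderiv ?_
    ext v
    have h3 : ∀ j, MvPolynomial.eval x (MvPolynomial.pderiv j (p * MvPolynomial.X i)) =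
        MvPolynomial.eval x (MvPolynomial.pderiv j p) * x i + MvPolynomial.eval x p * (if i = j then 1 else 0) := by
      intro j
      rw [MvPolynomial.pderiv_mul, MvPolynomial.pderiv_X, Pi.single_apply]
      by_cases hij : i = j
      · subst hij; simp
      · simp [hij, Ne.symm hij]
    simp only [h3]
    simp [add_mul, Finset.sum_add_distrib, Finset.mul_sum]
    rw [add_comm]
    congr 1
    exact Finset.sum_congr rfl fun j _ => by ring

lemma continuous_evalx {n : ℕ} (p : MvPolynomial (Fin n) ℝ) : Continuous (fun x : Fin n → ℝ => MvPolynomial.eval x p) :=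
  MvPolynomial.continuous_eval p

lemma crit_of_max {n : ℕ} (p : MvPolynomial (Fin n) ℝ) (x0 x : Fin n → ℝ) (r : ℝ) (hx : dist x x0 < r)
    (hmax : ∀ z, dist z x0 ≤ r → MvPolynomial.eval z p ≤ MvPolynomial.eval x p) (j : Fin n) :
    MvPolynomial.eval x (MvPolynomial.pderiv j p) = 0 := by
  classical
  have hloc : IsLocalMax (fun x => MvPolynomial.eval x p) x := by
    have : Metric.ball x0 r ∈ 𝓝 x := Metric.isOpen_ball.mem_nhds hx
    filter_upwards [this] with z hz
    exact hmax z (Metric.mem_ball.1 hz).le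
  have h0 := hloc.hasFDerivAt_eq_zero (hasFDerivAt_eval p x)
  have h1 := congrArg (fun L => L (Pi.single j 1)) h0
  simpa [Pi.single_apply] using h1

section
open Asymptotics MvPolynomial
variable {l : Ultrafilter ℕ} {π : ℕ → ℝ}

lemma SmallP.poly_bdd (hπ : SmallP l π) (S : Polynomial ℝ) : (fun i => S.eval (π i)) =O[l] (fun _ => (1:ℝ)) := by
  have h1 : Tendsto (fun i => S.eval (π i)) l (𝓝 (S.eval 0)) := (S.continuous.tendsto 0).comp hπ.2
  exact h1.isBigO_one ℝ

lemma eval_aeval_S {n : ℕ} (S : Fin n → Polynomial ℝ) (p : MvPolynomial (Fin n) ℝ) (t : ℝ) :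
    (aeval S p).eval t = eval (fun j => (S j).eval t) p := by
  induction p using MvPolynomial.induction_on with
  | C a => simp
  | add p q hp hq => simp [hp, hq]
  | mul_X p i hp => simp [hp]

lemma approx_poly (hπ : SmallP l π) {n : ℕ} (x : ℕ → Fin n → ℝ) (S : Fin n → Polynomial ℝ) (K : ℕ)
    (hS : ∀ j, (fun i => x i j - (S j).eval (π i)) =O[l] fun i => π i ^ K) (p : MvPolynomial (Fin n) ℝ) :
    (fun i => eval (x i) p - (aeval S p).eval (π i)) =O[l] fun i => π i ^ K := by
  induction p using MvPolynomial.induction_on with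
  | C a => simpa using isBigO_zero _ _
  | add p q hp hq =>
    refine (hp.add hq).congr_left fun i => ?_
    simp; ring
  | mul_X p j hp =>
    have hx : (fun i => x i j) =O[l] (fun _ => (1:ℝ)) := by
      have := ((hS j).trans (hπ.pow_O_one K)).add (hπ.poly_bdd (S j))
      refine this.congr_left fun i => by ring
    have h0 := hp.mul hx
    have h0' := (hπ.poly_bdd (aeval S p)).mul (hS j)
    simp only [mul_one, one_mul] at h0 h0'
    have h1 := h0.add h0'
    refine h1.congr_left fun i => ?_
    simp; ring

lemma deriv_lemma (hπ : SmallP l π) {n : ℕ} (x : ℕ → Fin n → ℝ) (S : Fin n → Polynomial ℝ) (K : ℕ)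
    (hS : ∀ j, (fun i => x i j - (S j).eval (π i)) =O[l] fun i => π i ^ K) (p : MvPolynomial (Fin n) ℝ)
    {a : ℕ} (ha : 1 ≤ a) (haK : a + 1 ≤ K) (hp : (fun i => eval (x i) p) =Θ[l] fun i => π i ^ a) :
    (fun i => ∑ j, eval (x i) (pderiv j p) * (S j).derivative.eval (π i)) =Θ[l] fun i => π i ^ (a-1) := by
  set γ : Polynomial ℝ := aeval S p with hγ
  have h1 : (fun i => γ.eval (π i)) =Θ[l] fun i => π i ^ a := by
    have h2 : (fun i => γ.eval (π i) - eval (x i) p) =o[l] fun i => π i ^ a :=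
      ((approx_poly hπ x S K hS p).neg_left.congr_left fun i => by ring).trans_isLittleO (hπ.pow_o (by omega))
    have h3 := hp.add_isLittleO h2
    exact (EventuallyEq.of_eq (by funext i; simp)).trans_isTheta h3
  have h2 := hπ.poly_deriv_theta ha h1
  have h3 : γ.derivative = ∑ j, aeval S (pderiv j p) * (S j).derivative :=
    chain_rule (Polynomial.derivative' : Derivation ℝ (Polynomial ℝ) (Polynomial ℝ)) S p
  have h4 : (fun i => (∑ j, eval (x i) (pderiv j p) * (S j).derivative.eval (π i)) - γ.derivative.eval (π i))
      =o[l] fun i => π i ^ (a-1) := by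
    refine IsBigO.trans_isLittleO (g := fun i => π i ^ K) ?_ (hπ.pow_o (by omega))
    have : ∀ i, (∑ j, eval (x i) (pderiv j p) * (S j).derivative.eval (π i)) - γ.derivative.eval (π i) =
      ∑ j, (eval (x i) (pderiv j p) - (aeval S (pderiv j p)).eval (π i)) * (S j).derivative.eval (π i) := by
      intro i
      rw [h3, Polynomial.eval_finsetSum, ← Finset.sum_sub_distrib]
      refine Finset.sum_congr rfl fun j _ => ?_
      simp; ring
    simp only [this]
    refine IsBigO.fun_sum fun j _ => ?_
    have := (approx_poly hπ x S K hS (pderiv j p)).mul (hπ.poly_bdd (S j).derivative)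
    simpa using this
  have h5 := h2.add_isLittleO h4
  exact (EventuallyEq.of_eq (by funext i; simp)).trans_isTheta h5

lemma grad_lower (hπ : SmallP l π) {n : ℕ} (x : ℕ → Fin n → ℝ) (S : Fin n → Polynomial ℝ) (K : ℕ)
    (hS : ∀ j, (fun i => x i j - (S j).eval (π i)) =O[l] fun i => π i ^ K) (p : MvPolynomial (Fin n) ℝ)
    {a : ℕ} (ha : 1 ≤ a) (haK : a + 1 ≤ K) (hp : (fun i => eval (x i) p) =Θ[l] fun i => π i ^ a) :
    (fun i => π i ^ (2*a-2)) =O[l] fun i => eval (x i) (gsq p) := by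
  have h1 := ((deriv_lemma hπ x S K hS p ha haK hp).isBigO_symm).pow 2
  have h2 : (fun i => (∑ j, eval (x i) (pderiv j p) * (S j).derivative.eval (π i))^2) =O[l]
      fun i => eval (x i) (gsq p) * ∑ j, ((S j).derivative.eval (π i))^2 := by
    refine IsBigO.of_bound 1 (Eventually.of_forall fun i => ?_)
    rw [one_mul, Real.norm_of_nonneg (by positivity), Real.norm_of_nonneg (mul_nonneg (gsq_nonneg _ _) (by positivity)), eval_gsq]
    exact Finset.sum_mul_sq_le_sq_mul_sq _ _ _
  have h3 : (fun i => ∑ j, ((S j).derivative.eval (π i))^2) =O[l] fun _ => (1:ℝ) := by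
    refine IsBigO.fun_sum fun j _ => ?_
    simpa using (hπ.poly_bdd (S j).derivative).pow 2
  have h4 := (h1.trans h2).trans ((isBigO_refl _ _).mul h3)
  refine h4.congr (fun i => ?_) (fun i => by simp)
  rw [← pow_mul]; congr 1; omega
end

def Rk (k n : ℕ) : ℕ := max (k * (3*k-4)^(n-1)) (2*k*(3*k-3)^(n-2))
def th (k n : ℕ) : ℝ := 1 - 1/((Rk k n : ℕ):ℝ)

lemma four_le_Rk {k : ℕ} (hk : 2 ≤ k) (n : ℕ) : 4 ≤ Rk k n := by
  refine le_trans ?_ (le_max_right _ _)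
  have : 1 ≤ (3*k-3)^(n-2) := Nat.one_le_pow _ _ (by omega)
  nlinarith

lemma Rk_mono {k : ℕ} (hk : 2 ≤ k) (n : ℕ) : Rk k n ≤ Rk k (n+1) := by
  unfold Rk
  refine max_le_max ?_ ?_
  · exact Nat.mul_le_mul_left _ (Nat.pow_le_pow_right (by omega) (by omega))
  · exact Nat.mul_le_mul_left _ (Nat.pow_le_pow_right (by omega) (by omega))

lemma Rk_bound {k : ℕ} (hk : 2 ≤ k) (n : ℕ) (hn : 1 ≤ n) (hn2 : n ≠ 2) : (2*k-3)^n + 2 ≤ Rk k n := by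
  obtain ⟨j, rfl⟩ : ∃ j, k = j + 2 := ⟨k-2, by omega⟩
  have e1 : 2*(j+2)-3 = 2*j+1 := by omega
  have e2 : 3*(j+2)-4 = 3*j+2 := by omega
  rw [e1]
  by_cases h1 : n = 1
  · subst h1
    refine le_trans ?_ (le_max_right _ _)
    simp; omega
  · obtain ⟨m, rfl⟩ : ∃ m, n = m + 3 := ⟨n-3, by omega⟩
    refine le_trans ?_ (le_max_left _ _)
    rw [e2, show m + 3 - 1 = m + 2 by omega]
    clear hn hn2 h1
    induction m with
    | zero => simp only [zero_add]; nlinarith [sq_nonneg j, Nat.zero_le (j^3)]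
    | succ m ih =>
      rw [show m + 1 + 3 = (m+3)+1 by omega, show m+1+2 = (m+2)+1 by omega, pow_succ, pow_succ (3*j+2)]
      have h2 : (j+2) * ((3*j+2)^(m+2) * (3*j+2)) = ((j+2) * (3*j+2)^(m+2)) * (3*j+2) := by ring
      rw [h2]
      calc (2*j+1)^(m+3) * (2*j+1) + 2 ≤ ((2*j+1)^(m+3) + 2) * (2*j+1) := by nlinarith
        _ ≤ ((j+2) * (3*j+2)^(m+2)) * (3*j+2) := Nat.mul_le_mul ih (by omega)

lemma Rk_two {k : ℕ} : k * (3*k-4) ≤ Rk k 2 := by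
  refine le_trans ?_ (le_max_left _ _)
  simp

lemma th_ge {k : ℕ} (hk : 2 ≤ k) (n : ℕ) : 3/4 ≤ th k n := by
  have h : (4:ℝ) ≤ Rk k n := by exact_mod_cast four_le_Rk hk n
  unfold th
  have : 1/((Rk k n : ℕ):ℝ) ≤ 1/4 := one_div_le_one_div_of_le (by norm_num) h
  linarith

lemma th_lt {k : ℕ} (hk : 2 ≤ k) (n : ℕ) : th k n < 1 := by
  have h : (4:ℝ) ≤ Rk k n := by exact_mod_cast four_le_Rk hk n
  unfold th
  have : 0 < 1/((Rk k n : ℕ):ℝ) := by positivity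
  linarith

lemma th_mono {k : ℕ} (hk : 2 ≤ k) (n : ℕ) : th k n ≤ th k (n+1) := by
  have h : (4:ℝ) ≤ Rk k n := by exact_mod_cast four_le_Rk hk n
  have h2 : (Rk k n : ℝ) ≤ Rk k (n+1) := by exact_mod_cast Rk_mono hk n
  unfold th
  have : 1/((Rk k (n+1) : ℕ):ℝ) ≤ 1/((Rk k n : ℕ):ℝ) := one_div_le_one_div_of_le (by linarith) h2
  linarith

def LojA (k m : ℕ) : Prop := ∀ f : MvPolynomial (Fin m) ℝ, f.totalDegree ≤ k → ∀ x0 : Fin m → ℝ,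
  MvPolynomial.eval x0 f = 0 → ∃ c > 0, ∃ ε > 0, ∀ z, dist z x0 < ε →
    c * |MvPolynomial.eval z f| ^ (2 * th k m) ≤ MvPolynomial.eval z (gsq f)

lemma LojA_zero {k : ℕ} (hk : 2 ≤ k) : LojA k 0 := by
  intro f _ x0 h0
  refine ⟨1, one_pos, 1, one_pos, fun z _ => ?_⟩
  have : z = x0 := Subsingleton.elim _ _
  rw [this, h0, abs_zero, Real.zero_rpow (by have := th_ge hk 0; linarith), mul_zero]
  exact gsq_nonneg _ _

open MvPolynomial in
/-- restriction to a coordinate hyperplane -/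
def faceP {m : ℕ} (j : Fin (m+1)) (v : ℝ) (f : MvPolynomial (Fin (m+1)) ℝ) : MvPolynomial (Fin m) ℝ :=
  aeval (j.insertNth (α := fun _ => MvPolynomial (Fin m) ℝ) (C v) X) f

open MvPolynomial in
lemma faceP_deg {m : ℕ} (j : Fin (m+1)) (v : ℝ) (f : MvPolynomial (Fin (m+1)) ℝ) :
    (faceP j v f).totalDegree ≤ f.totalDegree := by
  refine totalDegree_aeval_le _ (fun i => ?_) f
  refine Fin.succAboveCases j ?_ (fun i => ?_) i
  · simp
  · simp [totalDegree_X]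

open MvPolynomial in
lemma faceP_eval {m : ℕ} (j : Fin (m+1)) (v : ℝ) (f : MvPolynomial (Fin (m+1)) ℝ) (x : Fin (m+1) → ℝ) (hx : x j = v) :
    eval (fun i => x (j.succAbove i)) (faceP j v f) = eval x f := by
  unfold faceP
  induction f using MvPolynomial.induction_on with
  | C a => simp
  | add p q hp hq => rw [map_add, map_add, map_add, hp, hq]
  | mul_X p i hp =>
    rw [map_mul, map_mul, hp, map_mul, aeval_X, eval_X]
    congr 1
    refine Fin.succAboveCases j ?_ (fun i => ?_) i
    · simp [hx]
    · simp

open MvPolynomial in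
lemma faceP_pderiv {m : ℕ} (j : Fin (m+1)) (v : ℝ) (f : MvPolynomial (Fin (m+1)) ℝ) (i : Fin m) :
    pderiv i (faceP j v f) = faceP j v (pderiv (j.succAbove i) f) := by
  classical
  unfold faceP
  rw [chain_rule (pderiv i), Fin.sum_univ_succAbove _ j]
  simp only [Fin.insertNth_apply_same, pderiv_C, mul_zero, zero_add, Fin.insertNth_apply_succAbove, pderiv_X]
  rw [Finset.sum_eq_single i]
  · simp
  · intro b _ hb; simp [hb]
  · simp

open MvPolynomial in
lemma faceP_gsq {m : ℕ} (j : Fin (m+1)) (v : ℝ) (f : MvPolynomial (Fin (m+1)) ℝ) (x : Fin (m+1) → ℝ) (hx : x j = v) :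
    eval (fun i => x (j.succAbove i)) (gsq (faceP j v f)) ≤ eval x (gsq f) := by
  rw [eval_gsq, eval_gsq, Fin.sum_univ_succAbove _ j]
  simp only [faceP_pderiv, faceP_eval j v _ x hx]
  nlinarith [sq_nonneg (eval x (pderiv j f))]

open MvPolynomial Asymptotics in
lemma face {k m : ℕ} (hk : 2 ≤ k) (hA : LojA k m) (f : MvPolynomial (Fin (m+1)) ℝ) (hf : f.totalDegree ≤ k)
    {l : Ultrafilter ℕ} (x : ℕ → Fin (m+1) → ℝ) (xl : Fin (m+1) → ℝ) (hx : Tendsto x l (𝓝 xl))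
    (hpos : ∀ᶠ i in (l:Filter ℕ), 0 < eval (x i) f) (hxl : eval xl f = 0)
    (hG : (fun i => eval (x i) (gsq f)) =o[l] fun i => (eval (x i) f) ^ (2 * th k (m+1)))
    (x0 : Fin (m+1) → ℝ) (r : ℝ) (hr : 0 < r) (hball : ∀ᶠ i in (l:Filter ℕ), dist (x i) x0 ≤ r) :
    ∀ᶠ i in (l:Filter ℕ), dist (x i) x0 < r := by
  by_contra hcon
  rw [← Ultrafilter.eventually_not] at hcon
  have h1 : ∀ᶠ i in (l:Filter ℕ), ∃ q : Fin (m+1) × Bool, x i q.1 = if q.2 then x0 q.1 + r else x0 q.1 - r := by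
    filter_upwards [hcon, hball] with i h1 h2
    have h3 : ¬ ∀ j, dist (x i j) (x0 j) < r := fun h => h1 ((dist_pi_lt_iff hr).2 h)
    push Not at h3
    obtain ⟨j, hj⟩ := h3
    have h4 : |x i j - x0 j| = r := le_antisymm ((dist_le_pi_dist _ _ j).trans h2) hj
    rcases (abs_eq hr.le).1 h4 with h5 | h5
    · exact ⟨(j, true), by simp; linarith⟩
    · exact ⟨(j, false), by simp; linarith⟩
  rw [Ultrafilter.eventually_exists_iff] at h1
  obtain ⟨⟨j, b⟩, hq⟩ := h1
  set v : ℝ := if b then x0 j + r else x0 j - r with hv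
  have hxj : ∀ᶠ i in (l:Filter ℕ), x i j = v := hq
  have hxlj : xl j = v := by
    have h2 : Tendsto (fun i => x i j) l (𝓝 (xl j)) := (continuous_apply j).continuousAt.tendsto.comp hx
    have h3 : Tendsto (fun i => x i j) l (𝓝 v) := tendsto_const_nhds.congr' (hxj.mono fun i hi => hi.symm)
    exact tendsto_nhds_unique h2 h3
  obtain ⟨c, hc, ε, hε, hcε⟩ := hA (faceP j v f) ((faceP_deg j v f).trans hf) (fun i => xl (j.succAbove i))
    (by rw [faceP_eval j v f xl hxlj, hxl])
  have hnear : ∀ᶠ i in (l:Filter ℕ), dist (fun q => x i (j.succAbove q)) (fun q => xl (j.succAbove q)) < ε := by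
    have hcont : Continuous (fun y : Fin (m+1) → ℝ => fun q => y (j.succAbove q)) := by fun_prop
    exact (hcont.continuousAt.tendsto.comp hx).eventually (Metric.ball_mem_nhds _ hε)
  have hfx : Tendsto (fun i => eval (x i) f) l (𝓝 0) := by
    rw [← hxl]; exact (continuous_evalx f).continuousAt.tendsto.comp hx
  have hlt1 := hfx.eventually (gt_mem_nhds one_pos)
  have hGb := hG.def (c := c/2) (by positivity)
  obtain ⟨i, h1, h2, h3, h4, h5⟩ := (hxj.and (hnear.and (hpos.and (hlt1.and hGb)))).exists
  have h6 := hcε _ h2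
  rw [faceP_eval j v f _ h1] at h6
  have h7 := faceP_gsq j v f _ h1
  rw [abs_of_pos h3] at h6
  have h8 : eval (x i) f ^ (2 * th k (m+1)) ≤ eval (x i) f ^ (2 * th k m) :=
    Real.rpow_le_rpow_of_exponent_ge h3 h4.le (by linarith [th_mono hk m])
  have h9 : 0 < eval (x i) f ^ (2 * th k (m+1)) := Real.rpow_pos_of_pos h3 _
  rw [Real.norm_of_nonneg (gsq_nonneg _ _), Real.norm_of_nonneg h9.le] at h5
  nlinarith

section
open MvPolynomial Asymptotics

def linP {n : ℕ} (ζ : Fin n → ℝ) : MvPolynomial (Fin n) ℝ := ∑ j, C (ζ j) * X j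

lemma linP_eval {n : ℕ} (ζ x : Fin n → ℝ) : eval x (linP ζ) = ∑ j, ζ j * x j := by simp [linP]

lemma linP_pderiv {n : ℕ} (ζ : Fin n → ℝ) (j : Fin n) : pderiv j (linP ζ) = C (ζ j) := by
  classical
  unfold linP
  rw [map_sum, Finset.sum_eq_single j]
  · simp [pderiv_mul]
  · intro b _ hb; simp [pderiv_mul, pderiv_X, hb]
  · simp

lemma linP_diff {n : ℕ} (ζ x y : Fin n → ℝ) (r : ℝ) (h : dist x y ≤ r) :
    |eval x (linP ζ) - eval y (linP ζ)| ≤ r * ∑ j, |ζ j| := by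
  rw [linP_eval, linP_eval, ← Finset.sum_sub_distrib, Finset.mul_sum]
  refine (Finset.abs_sum_le_sum_abs _ _).trans (Finset.sum_le_sum fun j _ => ?_)
  rw [← mul_sub, abs_mul, mul_comm]
  exact mul_le_mul_of_nonneg_right ((dist_le_pi_dist x y j).trans h) (abs_nonneg _)

lemma ball_limit {n : ℕ} (l : Ultrafilter ℕ) (x : ℕ → Fin n → ℝ) (x0 : Fin n → ℝ) (r : ℝ) (h : ∀ i, dist (x i) x0 ≤ r) :
    ∃ xl, dist xl x0 ≤ r ∧ Tendsto x l (𝓝 xl) := by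
  obtain ⟨xl, h1, h2⟩ := (isCompact_closedBall x0 r).ultrafilter_le_nhds (l.map x)
    (by
      rw [le_principal_iff]
      have hmem : ∀ᶠ i in (l:Filter ℕ), x i ∈ Metric.closedBall x0 r := Eventually.of_forall fun i => h i
      exact hmem)
  exact ⟨xl, h1, h2⟩

lemma exists_max_ball {n : ℕ} (p : MvPolynomial (Fin n) ℝ) (x0 : Fin n → ℝ) {r : ℝ} (hr : 0 < r) :
    ∃ x, dist x x0 ≤ r ∧ ∀ z, dist z x0 ≤ r → eval z p ≤ eval x p := by
  obtain ⟨x, hx, hm⟩ := (isCompact_closedBall x0 r).exists_isMaxOn ⟨x0, by simp [hr.le]⟩ (continuous_evalx p).continuousOn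
  exact ⟨x, hx, fun z hz => hm hz⟩

lemma superdecay {l : Ultrafilter ℕ} (hl : (l:Filter ℕ) ≤ atTop) {τ : ℕ → ℝ} (hτ : SmallP l τ) (n m : ℕ) :
    ∀ᶠ i in (l:Filter ℕ), ∀ j : Fin n, 0 < τ i ^ (i ^ ((j:ℕ)+1)) ∧ τ i ^ (i ^ ((j:ℕ)+1)) ≤ τ i ^ m := by
  filter_upwards [hτ.1, hτ.lt_one, hl (eventually_ge_atTop (m+1))] with i h1 h2 h3 j
  refine ⟨by positivity, pow_le_pow_of_le_one h1.le h2.le ?_⟩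
  calc m ≤ i := by omega
    _ = i^1 := (pow_one i).symm
    _ ≤ _ := Nat.pow_le_pow_right (by omega) (by omega)

lemma bdd_of_tendsto {n : ℕ} {l : Ultrafilter ℕ} {x : ℕ → Fin n → ℝ} {xl : Fin n → ℝ} (h : Tendsto x l (𝓝 xl))
    (p : MvPolynomial (Fin n) ℝ) : (fun i => eval (x i) p) =O[l] (fun _ => (1:ℝ)) :=
  ((continuous_evalx p).continuousAt.tendsto.comp h).isBigO_one ℝ

lemma mapC_deg {n : ℕ} (p : MvPolynomial (Fin n) ℝ) : (map (Polynomial.C : ℝ →+* Polynomial ℝ) p).totalDegree ≤ p.totalDegree :=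
  Finset.sup_mono (support_map_subset _ _)

lemma NC {k m : ℕ} (hk : 2 ≤ k) (hA : LojA k m) (f : MvPolynomial (Fin (m+1)) ℝ) (hf : f.totalDegree ≤ k)
    (x0 : Fin (m+1) → ℝ) (hx0 : eval x0 f = 0) :
    ∃ r > 0, r ≤ 1 ∧ ∀ z, dist z x0 ≤ r → eval z (gsq f) = 0 → eval z f ≤ 0 := by
  by_contra hcon
  push Not at hcon
  have hz : ∀ i : ℕ, ∃ z, dist z x0 ≤ 1/((i:ℝ)+1) ∧ eval z (gsq f) = 0 ∧ 0 < eval z f := by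
    intro i
    refine hcon (1/((i:ℝ)+1)) (by positivity) ?_
    rw [div_le_one (by positivity)]; linarith [Nat.cast_nonneg (α := ℝ) i]
  choose z hz1 hz2 hz3 using hz
  have hzt : Tendsto z atTop (𝓝 x0) := by
    rw [tendsto_iff_dist_tendsto_zero]
    exact squeeze_zero (fun _ => dist_nonneg) hz1 tendsto_one_div_add_atTop_nhds_zero_nat
  set l : Ultrafilter ℕ := hyperfilter ℕ with hl_def
  have hl : (l:Filter ℕ) ≤ atTop := Nat.hyperfilter_le_atTop
  set t : ℕ → ℝ := fun i => eval (z i) f with ht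
  have hts : SmallP l t := by
    refine ⟨Eventually.of_forall hz3, ?_⟩
    have := (continuous_evalx f).continuousAt.tendsto.comp hzt
    rw [hx0] at this
    exact this.mono_left hl
  let ζ : ℕ → Fin (m+1) → ℝ := fun i j => t i ^ (i ^ ((j:ℕ)+1))
  let Φ : ℕ → MvPolynomial (Fin (m+1)) ℝ := fun i => - (gsq f + (f - C (t i))^2 + linP (ζ i))
  choose x hx1 hx2 using fun i => exists_max_ball (Φ i) x0 (one_pos)
  obtain ⟨xl, hxl1, hxl⟩ := ball_limit l x x0 1 hx1
  -- smallness
  have hsmall : ∀ q : ℕ, ∀ᶠ i in (l:Filter ℕ), eval (x i) (gsq f) + (eval (x i) f - t i)^2 ≤ 2 * (m+1) * t i ^ q := by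
    intro q
    filter_upwards [superdecay hl hts (m+1) q, hts.1] with i h1 h2
    have h3 := hx2 i (z i) ((hz1 i).trans (by rw [div_le_one (by positivity)]; linarith [Nat.cast_nonneg (α := ℝ) i]))
    simp only [Φ, map_neg, map_add, map_pow, map_sub, eval_C, hz2 i] at h3
    have h4 : dist (z i) (x i) ≤ 2 := by
      have a1 := dist_triangle_right (z i) (x i) x0
      have a2 := hx1 i
      have a3 := (hz1 i).trans (by rw [div_le_one (by positivity)]; linarith [Nat.cast_nonneg (α := ℝ) i] : 1/((i:ℝ)+1) ≤ 1)
      linarith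
    have h5 := linP_diff (ζ i) (z i) (x i) 2 h4
    have h6 : ∑ j, |ζ i j| ≤ (m+1) * t i ^ q := by
      have : ∑ j, |ζ i j| ≤ ∑ j : Fin (m+1), t i ^ q :=
        Finset.sum_le_sum fun j _ => by rw [abs_of_pos (h1 j).1]; exact (h1 j).2
      refine this.trans (le_of_eq ?_)
      simp
    have h7 := (abs_le.1 h5).2
    have h8 : t i - eval (z i) f = 0 := by simp [ht]
    have h9 : eval (z i) f - t i = 0 := by simp [ht]
    rw [h9] at h3
    linarith
  have hGO : ∀ q : ℕ, (fun i => eval (x i) (gsq f)) =O[l] fun i => t i ^ q := by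
    intro q
    refine IsBigO.of_bound (2*(m+1)) ?_
    filter_upwards [hsmall q, hts.1] with i h1 h2
    rw [Real.norm_of_nonneg (gsq_nonneg _ _), Real.norm_of_nonneg (by positivity)]
    nlinarith [sq_nonneg (eval (x i) f - t i)]
  have hfo : (fun i => eval (x i) f - t i) =o[l] t := by
    have h1 : (fun i => eval (x i) f - t i) =O[l] fun i => t i ^ 2 := by
      refine IsBigO.of_bound (2*(m+1)) ?_
      filter_upwards [hsmall 4, hts.1] with i h1 h2
      rw [Real.norm_eq_abs, Real.norm_of_nonneg (by positivity)]
      refine abs_le_of_sq_le_sq ?_ (by positivity)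
      have h3 := gsq_nonneg f (x i)
      have h4 : (0:ℝ) ≤ m := Nat.cast_nonneg m
      have h5 : 0 < t i ^ 4 := by positivity
      calc _ ≤ 2 * (m+1) * t i ^ 4 := by linarith
        _ ≤ (2*((m:ℝ)+1))^2 * t i ^ 4 := by
            apply mul_le_mul_of_nonneg_right _ h5.le
            nlinarith
        _ = _ := by ring
    have h2 := h1.trans_isLittleO (hts.pow_o (a := 1) (b := 2) (by norm_num))
    simpa using h2
  have hfΘ : (fun i => eval (x i) f) =Θ[l] t := by
    have := (isTheta_refl t (l:Filter ℕ)).add_isLittleO hfo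
    exact (EventuallyEq.of_eq (by funext i; simp)).trans_isTheta this
  have hfpos : ∀ᶠ i in (l:Filter ℕ), 0 < eval (x i) f := by
    filter_upwards [hfo.def (c := 1/2) (by norm_num), hts.1] with i h1 h2
    rw [Real.norm_eq_abs, Real.norm_of_nonneg h2.le] at h1
    linarith [(abs_le.1 h1).1]
  have hfxl : eval xl f = 0 := by
    have h1 : Tendsto (fun i => eval (x i) f) l (𝓝 (eval xl f)) := (continuous_evalx f).continuousAt.tendsto.comp hxl
    have h2 : Tendsto (fun i => eval (x i) f) l (𝓝 0) := hfΘ.tendsto_zero_iff.2 hts.2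
    exact tendsto_nhds_unique h1 h2
  have hGo : (fun i => eval (x i) (gsq f)) =o[l] fun i => (eval (x i) f) ^ (2 * th k (m+1)) := by
    have h1 : (fun i => t i ^ (2:ℝ)) =o[l] fun i => t i ^ (2 * th k (m+1)) := hts.rpow_o (by linarith [th_lt hk (m+1)])
    have h2 := (hGO 2).trans_isLittleO (by simpa using h1)
    refine h2.trans_isTheta ?_
    exact hfΘ.symm.rpow (hts.1.mono fun _ h => h.le) (hfpos.mono fun _ h => h.le)
  have hinter := face hk hA f hf x xl hxl hfpos hfxl hGo x0 1 one_pos (Eventually.of_forall hx1)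
  let F : Fin (m+1) → MvPolynomial (Fin (m+1)) (Polynomial ℝ) := fun j =>
    -(map Polynomial.C (pderiv j (gsq f)) + ((map Polynomial.C f - C Polynomial.X) * map Polynomial.C (pderiv j f)
      + (map Polynomial.C f - C Polynomial.X) * map Polynomial.C (pderiv j f)))
  have hFdeg : ∀ j, (F j).totalDegree ≤ 2*k-1 := by
    intro j
    have d1 := (mapC_deg (pderiv j (gsq f))).trans (totalDegree_pderiv_le' j (gsq f))
    have d2 := totalDegree_gsq_le f hf
    have d3 := (mapC_deg (pderiv j f)).trans (totalDegree_pderiv_le' j f)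
    have d4 : (map Polynomial.C f - C Polynomial.X : MvPolynomial (Fin (m+1)) (Polynomial ℝ)).totalDegree ≤ k := by
      refine (totalDegree_sub _ _).trans (max_le ((mapC_deg f).trans hf) ?_)
      rw [totalDegree_C]; omega
    have d5 : ((map Polynomial.C f - C Polynomial.X) * map Polynomial.C (pderiv j f) : MvPolynomial (Fin (m+1)) (Polynomial ℝ)).totalDegree ≤ 2*k-1 := by
      refine (totalDegree_mul _ _).trans ?_
      omega
    simp only [F]
    rw [totalDegree_neg]
    refine (totalDegree_add _ _).trans (max_le (by omega) ((totalDegree_add _ _).trans (max_le d5 d5)))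
  have hFx : ∀ᶠ i in (l:Filter ℕ), ∀ j, evU (m+1) (t i) (x i) (F j) = t i ^ (i ^ ((j:ℕ)+1)) := by
    filter_upwards [hinter] with i hi j
    have h1 := crit_of_max (Φ i) x0 (x i) 1 hi (hx2 i) j
    simp only [Φ, map_neg, map_add, pderiv_pow, map_sub, pderiv_C, linP_pderiv, map_mul, eval_C] at h1
    simp only [F, map_neg, map_add, map_mul, map_sub, evU_map, evU_C, Polynomial.eval_X]
    simp at h1
    change _ = ζ i j
    linarith
  have hmod := modH_generic hl hts F (2*k-1) (by omega) hFdeg x hFx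
  have htF : t ∈ FldOf l (fun i => evU (m+1) (t i) (x i)) := by
    have := FldOf_mem l (fun i => evU (m+1) (t i) (x i)) (C Polynomial.X)
    simpa only [evU_C, Polynomial.eval_X] using this
  obtain ⟨e, π, he1, he2, hπ, hte, -, hexp⟩ := place hts _ (FldOf_inv l _) htF _ hmod
  have hxF : ∀ j, (fun i => x i j) ∈ FldOf l (fun i => evU (m+1) (t i) (x i)) := by
    intro j
    have := FldOf_mem l (fun i => evU (m+1) (t i) (x i)) (X j)
    simpa only [evU_X] using this
  have hS : ∀ j, ∃ S : Polynomial ℝ, (fun i => x i j - S.eval (π i)) =O[l] fun i => π i ^ (e+1) := by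
    intro j
    refine hexp _ (hxF j) ?_ (e+1)
    simpa using bdd_of_tendsto hxl (X j)
  choose S hS using hS
  have hlow := grad_lower hπ x S (e+1) hS f he1 le_rfl (hfΘ.trans hte)
  have hup : (fun i => eval (x i) (gsq f)) =O[l] fun i => π i ^ (2*e) := by
    refine ((hGO 2).trans (hte.isBigO.pow 2)).congr_right fun i => ?_
    rw [← pow_mul, mul_comm]
  have := hπ.le_of_pow_O (hlow.trans hup)
  omega
end

section
open MvPolynomial Asymptotics

lemma maximizer {k m : ℕ} (hk : 2 ≤ k) (hA : LojA k m) (f : MvPolynomial (Fin (m+1)) ℝ) (hf : f.totalDegree ≤ k)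
    (x0 : Fin (m+1) → ℝ) (r : ℝ) (hr : 0 < r) (hr1 : r ≤ 1)
    (hNC : ∀ z, dist z x0 ≤ r → eval z (gsq f) = 0 → eval z f ≤ 0)
    {l : Ultrafilter ℕ} (z : ℕ → Fin (m+1) → ℝ) (hz : ∀ᶠ i in (l:Filter ℕ), dist (z i) x0 ≤ r)
    (t : ℕ → ℝ) (ht : ∀ i, eval (z i) f = t i) (hts : SmallP l t) (τ : ℕ → ℝ) (hτ : SmallP l τ)
    (hG : ∀ᶠ i in (l:Filter ℕ), eval (z i) (gsq f) ≤ τ i * t i / 4)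
    (hτo : τ =o[l] fun i => t i ^ (2 * th k (m+1) - 1))
    (ζ : ℕ → Fin (m+1) → ℝ) (hζ : ∀ᶠ i in (l:Filter ℕ), 2 * ∑ j, |ζ i j| ≤ τ i * t i / 2) :
    ∃ (x : ℕ → Fin (m+1) → ℝ) (xl : Fin (m+1) → ℝ), Tendsto x l (𝓝 xl) ∧ (∀ᶠ i in (l:Filter ℕ), t i / 4 ≤ eval (x i) f) ∧
      SmallP l (fun i => eval (x i) f) ∧
      (fun i => eval (x i) (gsq f)) =O[l] (fun i => τ i * eval (x i) f) ∧
      (fun i => eval (x i) (gsq f)) =o[l] (fun i => (eval (x i) f) ^ (2 * th k (m+1))) ∧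
      ∀ᶠ i in (l:Filter ℕ), ∀ j, τ i * eval (x i) (pderiv j f) - eval (x i) (pderiv j (gsq f)) = ζ i j := by
  let Φ : ℕ → MvPolynomial (Fin (m+1)) ℝ := fun i => C (τ i) * f - gsq f - linP (ζ i)
  choose x hx1 hx2 using fun i => exists_max_ball (Φ i) x0 hr
  obtain ⟨xl, hxl1, hxl⟩ := ball_limit l x x0 r hx1
  have hkey : ∀ᶠ i in (l:Filter ℕ), τ i * t i / 4 ≤ τ i * eval (x i) f - eval (x i) (gsq f) := by
    filter_upwards [hz, hG, hζ] with i h1 h2 h3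
    have h4 := hx2 i (z i) h1
    simp only [Φ, map_sub, map_mul, eval_C, ht] at h4
    have h5 : dist (z i) (x i) ≤ 2 := by
      have a1 := dist_triangle_right (z i) (x i) x0
      have a2 := hx1 i
      linarith
    have h6 := (abs_le.1 (linP_diff (ζ i) (z i) (x i) 2 h5)).2
    linarith
  have hlow : ∀ᶠ i in (l:Filter ℕ), t i / 4 ≤ eval (x i) f := by
    filter_upwards [hkey, hτ.1] with i h1 h2
    have h3 := gsq_nonneg f (x i)
    have : τ i * (t i / 4) ≤ τ i * eval (x i) f := by linarith
    exact le_of_mul_le_mul_left this h2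
  have hpos : ∀ᶠ i in (l:Filter ℕ), 0 < eval (x i) f := by
    filter_upwards [hlow, hts.1] with i h1 h2
    linarith
  have hGO : (fun i => eval (x i) (gsq f)) =O[l] (fun i => τ i * eval (x i) f) := by
    refine IsBigO.of_bound 1 ?_
    filter_upwards [hkey, hτ.1, hts.1, hpos] with i h1 h2 h3 h4
    rw [Real.norm_of_nonneg (gsq_nonneg _ _), Real.norm_of_nonneg (by positivity)]
    have : 0 < τ i * t i := by positivity
    linarith
  have hGl : Tendsto (fun i => eval (x i) (gsq f)) l (𝓝 (eval xl (gsq f))) := (continuous_evalx _).continuousAt.tendsto.comp hxl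
  have hfl : Tendsto (fun i => eval (x i) f) l (𝓝 (eval xl f)) := (continuous_evalx _).continuousAt.tendsto.comp hxl
  have hGl0 : eval xl (gsq f) = 0 := by
    refine tendsto_nhds_unique hGl (hGO.trans_tendsto ?_)
    simpa using hτ.2.mul hfl
  have hfxl : eval xl f = 0 := by
    refine le_antisymm (hNC xl hxl1 hGl0) (ge_of_tendsto hfl (hpos.mono fun _ h => h.le))
  rw [hfxl] at hfl
  have hts' : SmallP l (fun i => eval (x i) f) := ⟨hpos, hfl⟩
  have hGo : (fun i => eval (x i) (gsq f)) =o[l] (fun i => (eval (x i) f) ^ (2 * th k (m+1))) := by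
    have h0 : 0 ≤ 2 * th k (m+1) - 1 := by linarith [th_ge hk (m+1)]
    have h1 : (fun i => t i ^ (2 * th k (m+1) - 1)) =O[l] fun i => (eval (x i) f) ^ (2 * th k (m+1) - 1) := by
      have : (fun i => t i) =O[l] fun i => eval (x i) f := by
        refine IsBigO.of_bound 4 ?_
        filter_upwards [hlow, hts.1, hpos] with i h1 h2 h3
        rw [Real.norm_of_nonneg h2.le, Real.norm_of_nonneg h3.le]; linarith
      exact this.rpow h0 (hpos.mono fun _ h => h.le)
    have h2 := (hτo.trans_isBigO h1).mul_isBigO (isBigO_refl (fun i => eval (x i) f) (l:Filter ℕ))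
    refine (hGO.trans_isLittleO h2).congr' EventuallyEq.rfl ?_
    filter_upwards [hpos] with i hi
    rw [Real.rpow_sub_one hi.ne']
    field_simp
  have hinter := face hk hA f hf x xl hxl hpos hfxl hGo x0 r hr (Eventually.of_forall hx1)
  refine ⟨x, xl, hxl, hlow, hts', hGO, hGo, ?_⟩
  filter_upwards [hinter] with i hi j
  have h1 := crit_of_max (Φ i) x0 (x i) r hi (hx2 i) j
  simp only [Φ, map_sub, pderiv_mul, pderiv_C, linP_pderiv, map_add, map_mul, eval_C, map_zero, zero_mul, zero_add] at h1
  linarith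

/-- general dimension different from two -/
lemma genericCase {k m : ℕ} (hk : 2 ≤ k) (hm : m ≠ 1) (f : MvPolynomial (Fin (m+1)) ℝ) (hf : f.totalDegree ≤ k)
    {l : Ultrafilter ℕ} (hl : (l:Filter ℕ) ≤ atTop) (τ : ℕ → ℝ) (hτ : SmallP l τ)
    (x : ℕ → Fin (m+1) → ℝ) (xl : Fin (m+1) → ℝ) (hxl : Tendsto x l (𝓝 xl))
    (hτf : ∀ᶠ i in (l:Filter ℕ), τ i ^ 2 / 4 ≤ eval (x i) f)
    (hfs : SmallP l (fun i => eval (x i) f))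
    (hGO : (fun i => eval (x i) (gsq f)) =O[l] (fun i => τ i * eval (x i) f))
    (hGo : (fun i => eval (x i) (gsq f)) =o[l] (fun i => (eval (x i) f) ^ (2 * th k (m+1))))
    (hcr : ∀ᶠ i in (l:Filter ℕ), ∀ j : Fin (m+1), τ i * eval (x i) (pderiv j f) - eval (x i) (pderiv j (gsq f)) =
      τ i ^ (i ^ ((j:ℕ)+1))) : False := by
  let F : Fin (m+1) → MvPolynomial (Fin (m+1)) (Polynomial ℝ) := fun j =>
    C Polynomial.X * map Polynomial.C (pderiv j f) - map Polynomial.C (pderiv j (gsq f))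
  have hFdeg : ∀ j, (F j).totalDegree ≤ 2*k-3 := by
    intro j
    have d1 := (mapC_deg (pderiv j (gsq f))).trans (totalDegree_pderiv_le' j (gsq f))
    have d2 := totalDegree_gsq_le f hf
    have d3 := (mapC_deg (pderiv j f)).trans (totalDegree_pderiv_le' j f)
    have d5 : (C Polynomial.X * map Polynomial.C (pderiv j f) : MvPolynomial (Fin (m+1)) (Polynomial ℝ)).totalDegree ≤ 2*k-3 := by
      refine (totalDegree_mul _ _).trans ?_
      rw [totalDegree_C]
      omega
    exact (totalDegree_sub _ _).trans (max_le d5 (by omega))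
  have hFx : ∀ᶠ i in (l:Filter ℕ), ∀ j, evU (m+1) (τ i) (x i) (F j) = τ i ^ (i ^ ((j:ℕ)+1)) := by
    filter_upwards [hcr] with i hi j
    simp only [F, map_mul, map_sub, evU_map, evU_C, Polynomial.eval_X]
    exact hi j
  have hmod := modH_generic hl hτ F (2*k-3) (by omega) hFdeg x hFx
  have htF : τ ∈ FldOf l (fun i => evU (m+1) (τ i) (x i)) := by
    have := FldOf_mem l (fun i => evU (m+1) (τ i) (x i)) (C Polynomial.X)
    simpa only [evU_C, Polynomial.eval_X] using this
  obtain ⟨e, π, he1, he2, hπ, hτe, hval, hexp⟩ := place hτ _ (FldOf_inv l _) htF _ hmod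
  have hpF : ∀ p : MvPolynomial (Fin (m+1)) ℝ, (fun i => eval (x i) p) ∈ FldOf l (fun i => evU (m+1) (τ i) (x i)) := by
    intro p
    have := FldOf_mem l (fun i => evU (m+1) (τ i) (x i)) (map Polynomial.C p)
    simpa only [evU_map] using this
  have hS : ∀ (K : ℕ) (j), ∃ S : Polynomial ℝ, (fun i => x i j - S.eval (π i)) =O[l] fun i => π i ^ K := by
    intro K j
    refine hexp _ ?_ ?_ K
    · simpa using hpF (X j)
    · simpa using bdd_of_tendsto hxl (X j)
  -- order of f
  have hfl : (fun i => π i ^ (2*e)) =O[l] fun i => eval (x i) f := by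
    have h1 : (fun i => τ i ^ 2) =O[l] fun i => eval (x i) f := by
      refine IsBigO.of_bound 4 ?_
      filter_upwards [hτf, hfs.1] with i h1 h2
      rw [Real.norm_of_nonneg (by positivity), Real.norm_of_nonneg h2.le]; linarith
    refine IsBigO.trans ?_ h1
    refine (hτe.symm.isBigO.pow 2).congr_left fun i => ?_
    rw [← pow_mul, mul_comm]
  obtain ⟨a, ha⟩ := hval _ (hpF f) _ (bdd_of_tendsto hxl f) hfl
  have ha1 : 1 ≤ a := by
    by_contra h0
    have h0 : a = 0 := by omega
    subst h0
    have h1 := ha.tendsto_zero_iff.1 hfs.2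
    simp only [pow_zero] at h1
    exact one_ne_zero (tendsto_nhds_unique tendsto_const_nhds h1)
  choose S1 hS1 using hS (a+1)
  have hlow := grad_lower hπ x S1 (a+1) hS1 f ha1 le_rfl ha
  obtain ⟨g, hg⟩ := hval _ (hpF (gsq f)) _ (bdd_of_tendsto hxl (gsq f)) hlow
  have hg1 : g ≤ 2*a-2 := hπ.le_of_pow_O (hlow.trans hg.isBigO)
  have hg2 : e + a ≤ g := by
    refine hπ.le_of_pow_O ?_
    have h1 := hg.symm.isBigO.trans (hGO.trans (hτe.isBigO.mul ha.isBigO))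
    exact h1.congr_right fun i => (pow_add _ _ _).symm
  choose S hS using hS (a+e+g+1)
  have dA := deriv_lemma hπ x S _ hS f ha1 (by omega) ha
  have dB := deriv_lemma hπ x S _ hS (gsq f) (by omega) (by omega) hg
  have hZ : (fun i => ∑ j : Fin (m+1), τ i ^ (i ^ ((j:ℕ)+1)) * (S j).derivative.eval (π i)) =O[l] fun i => π i ^ (g-1) := by
    refine IsBigO.fun_sum fun j _ => ?_
    have h1 : (fun i => τ i ^ (i ^ ((j:ℕ)+1))) =O[l] fun i => π i ^ (g-1) := by
      have h2 : (fun i => τ i ^ (i ^ ((j:ℕ)+1))) =O[l] fun i => τ i ^ (g-1) := by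
        refine IsBigO.of_bound 1 ?_
        filter_upwards [superdecay hl hτ (m+1) (g-1), hτ.1] with i h1 h2
        rw [Real.norm_of_nonneg (h1 j).1.le, Real.norm_of_nonneg (by positivity), one_mul]
        exact (h1 j).2
      refine (h2.trans (hτe.isBigO.pow (g-1))).trans ?_
      refine IsBigO.congr_left (hπ.pow_O (a := g-1) (b := e*(g-1)) (Nat.le_mul_of_pos_left _ he1)) fun i => ?_
      rw [← pow_mul]
    simpa using h1.mul (hπ.poly_bdd (S j).derivative)
  have hg3 : g - 1 ≤ e + (a-1) := by
    refine hπ.le_of_pow_O ?_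
    have h1 := (hτe.mul dA).symm.isBigO
    have h2 : (fun i => τ i * ∑ j, eval (x i) (pderiv j f) * (S j).derivative.eval (π i)) =O[l] fun i => π i ^ (g-1) := by
      refine (dB.isBigO.add hZ).congr' ?_ EventuallyEq.rfl
      filter_upwards [hcr] with i hi
      rw [← Finset.sum_add_distrib, Finset.mul_sum]
      refine Finset.sum_congr rfl fun j _ => ?_
      rw [← hi j]; ring
    exact (h1.trans h2).congr_left fun i => (pow_add _ _ _).symm
  -- badness
  have hbad : 2 * th k (m+1) * a < g := by
    by_contra hcon
    push Not at hcon
    have h1 : (fun i => eval (x i) f ^ (2 * th k (m+1))) =Θ[l] fun i => π i ^ (2 * th k (m+1) * a) := by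
      have h2 := ha.rpow (r := 2 * th k (m+1)) (hfs.1.mono fun _ h => h.le) (hπ.1.mono fun _ h => by simp only [Pi.zero_apply]; positivity)
      refine h2.trans_eventuallyEq ?_
      filter_upwards [hπ.1] with i hi
      rw [← Real.rpow_natCast, ← Real.rpow_mul hi.le, mul_comm]
    have h3 : (fun i => π i ^ (2 * th k (m+1) * a)) =O[l] fun i => π i ^ (g:ℝ) := hπ.rpow_O hcon
    have h4 := (hg.symm.isBigO.trans_isLittleO hGo).trans_isBigO (h1.isBigO.trans h3)
    simp only [Real.rpow_natCast] at h4
    exact not_isLittleO_self (hπ.1.mono fun i h => by positivity) h4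
  have hR := Rk_bound hk (m+1) (by omega) (by omega)
  have h4 : (4:ℝ) ≤ Rk k (m+1) := by exact_mod_cast four_le_Rk hk (m+1)
  have hgg : g = e + a := by omega
  have hae : e + 2 ≤ a := by omega
  have heR : e + 2 ≤ Rk k (m+1) := by omega
  have hgg' : (g:ℝ) = e + a := by exact_mod_cast hgg
  have hae' : (e:ℝ) + 2 ≤ a := by exact_mod_cast hae
  have heR' : (e:ℝ) + 2 ≤ Rk k (m+1) := by exact_mod_cast heR
  rw [hgg'] at hbad
  unfold th at hbad
  set R : ℝ := ((Rk k (m+1) : ℕ) : ℝ)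
  have h5 : 2 * (1 - 1/R) * a * R < (e + a) * R := mul_lt_mul_of_pos_right hbad (by linarith)
  have h6 : 2 * (1 - 1/R) * a * R = 2 * a * R - 2 * a := by
    field_simp
  rw [h6] at h5
  nlinarith

/-- dimension two -/
lemma twoCase {k : ℕ} (hk : 2 ≤ k) (f Q : MvPolynomial (Fin 2) ℝ) (hf : f.totalDegree ≤ k)
    (hQ : Q.totalDegree ≤ 3*k-4) (hQ0 : Q ≠ 0)
    {l : Ultrafilter ℕ} (x : ℕ → Fin 2 → ℝ) (xl : Fin 2 → ℝ) (hxl : Tendsto x l (𝓝 xl))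
    (hfs : SmallP l (fun i => eval (x i) f))
    (hGo : (fun i => eval (x i) (gsq f)) =o[l] (fun i => (eval (x i) f) ^ (2 * th k 2)))
    (hQx : ∀ᶠ i in (l:Filter ℕ), eval (x i) Q = 0) : False := by
  have hmod := modH_two hfs f Q k (3*k-4) (by omega) (by omega) hf hQ hQ0 x (Eventually.of_forall fun _ => rfl) hQx
  have hpF : ∀ p : MvPolynomial (Fin 2) ℝ, (fun i => eval (x i) p) ∈ FldOf l (fun i => aeval (R := ℝ) (x i)) := by
    intro p
    have := FldOf_mem l (fun i => aeval (R := ℝ) (x i)) p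
    exact this
  obtain ⟨e, π, he1, he2, hπ, hte, -, hexp⟩ := place hfs _ (FldOf_inv l _) (hpF f) _ hmod
  have hS : ∀ (j), ∃ S : Polynomial ℝ, (fun i => x i j - S.eval (π i)) =O[l] fun i => π i ^ (e+1) := by
    intro j
    refine hexp _ ?_ ?_ _
    · simpa using hpF (X j)
    · simpa using bdd_of_tendsto hxl (X j)
  choose S hS using hS
  have hlow := grad_lower hπ x S (e+1) hS f he1 le_rfl hte
  have hbad : 2 * th k 2 * e < ((2*e-2 : ℕ):ℝ) := by
    by_contra hcon
    push Not at hcon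
    have h1 : (fun i => eval (x i) f ^ (2 * th k 2)) =Θ[l] fun i => π i ^ (2 * th k 2 * e) := by
      have h2 := hte.rpow (r := 2 * th k 2) (hfs.1.mono fun _ h => h.le) (hπ.1.mono fun _ h => by simp only [Pi.zero_apply]; positivity)
      refine h2.trans_eventuallyEq ?_
      filter_upwards [hπ.1] with i hi
      rw [← Real.rpow_natCast, ← Real.rpow_mul hi.le, mul_comm]
    have h3 : (fun i => π i ^ (2 * th k 2 * e)) =O[l] fun i => π i ^ ((2*e-2 : ℕ):ℝ) := hπ.rpow_O hcon
    have h4 := (hlow.trans_isLittleO hGo).trans_isBigO (h1.isBigO.trans h3)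
    simp only [Real.rpow_natCast] at h4
    exact not_isLittleO_self (hπ.1.mono fun i h => by positivity) h4
  have h4 : (4:ℝ) ≤ Rk k 2 := by exact_mod_cast four_le_Rk hk 2
  have heR : (e:ℝ) ≤ Rk k 2 := by exact_mod_cast he2.trans Rk_two
  rw [Nat.cast_sub (by omega)] at hbad
  push_cast at hbad
  unfold th at hbad
  set R : ℝ := ((Rk k 2 : ℕ) : ℝ)
  have h5 : 2 * (1 - 1/R) * e * R < (2 * e - 2) * R := mul_lt_mul_of_pos_right hbad (by linarith)
  have h6 : 2 * (1 - 1/R) * e * R = 2 * e * R - 2 * e := by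
    field_simp
  rw [h6] at h5
  nlinarith

lemma mainLemma {k m : ℕ} (hk : 2 ≤ k) (hA : LojA k m) (f : MvPolynomial (Fin (m+1)) ℝ) (hf : f.totalDegree ≤ k)
    (x0 : Fin (m+1) → ℝ) (hx0 : eval x0 f = 0) {l : Ultrafilter ℕ} (hl : (l:Filter ℕ) ≤ atTop)
    (z : ℕ → Fin (m+1) → ℝ) (hz : Tendsto z l (𝓝 x0)) (hpos : ∀ᶠ i in (l:Filter ℕ), 0 < eval (z i) f)
    (hbad : ∀ᶠ i in (l:Filter ℕ), eval (z i) (gsq f) * ((i:ℝ)+1)^2 ≤ (eval (z i) f) ^ (2 * th k (m+1))) : False := by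
  obtain ⟨r, hr, hr1, hNC⟩ := NC hk hA f hf x0 hx0
  set t : ℕ → ℝ := fun i => eval (z i) f with ht
  have hts : SmallP l t := by
    refine ⟨hpos, ?_⟩
    rw [← hx0]
    exact (continuous_evalx f).continuousAt.tendsto.comp hz
  set s : ℝ := 2 * th k (m+1) - 1 with hs
  have hs1 : 1/2 ≤ s := by linarith [th_ge hk (m+1)]
  set τ : ℕ → ℝ := fun i => t i ^ s / ((i:ℝ)+1) with hτd
  have hinv : Tendsto (fun i : ℕ => 1/((i:ℝ)+1)) l (𝓝 0) := tendsto_one_div_add_atTop_nhds_zero_nat.mono_left hl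
  have hτpos : ∀ᶠ i in (l:Filter ℕ), 0 < τ i := by
    filter_upwards [hts.1] with i hi
    have := Real.rpow_pos_of_pos hi s
    positivity
  have hτle : ∀ᶠ i in (l:Filter ℕ), τ i ≤ 1/((i:ℝ)+1) := by
    filter_upwards [hts.1, hts.lt_one] with i hi h1
    have := Real.rpow_le_one hi.le h1.le (by linarith : 0 ≤ s)
    simp only [hτd]
    gcongr
  have hτ : SmallP l τ := ⟨hτpos, squeeze_zero' (hτpos.mono fun _ h => h.le) hτle hinv⟩
  have hτo : τ =o[l] fun i => t i ^ s := by
    have h1 : (fun i : ℕ => 1/((i:ℝ)+1)) =o[l] fun _ => (1:ℝ) := (isLittleO_one_iff ℝ).2 hinv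
    have h2 := (isBigO_refl (fun i => t i ^ s) (l:Filter ℕ)).mul_isLittleO h1
    refine h2.congr (fun i => ?_) (fun i => ?_)
    · simp only [hτd]; ring
    · ring
  have hτ2 : ∀ᶠ i in (l:Filter ℕ), τ i ^ 2 ≤ t i := by
    filter_upwards [hts.1, hts.lt_one, hτpos] with i hi h1 h2
    have h3 : τ i ≤ t i ^ s := by
      simp only [hτd]
      refine div_le_self (Real.rpow_pos_of_pos hi s).le ?_
      linarith [Nat.cast_nonneg (α := ℝ) i]
    have h4 : t i ^ s ≤ t i ^ (1/2 : ℝ) := Real.rpow_le_rpow_of_exponent_ge hi h1.le hs1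
    calc τ i ^ 2 ≤ (t i ^ (1/2:ℝ))^2 := by gcongr; exact h3.trans h4
      _ = t i := by rw [← Real.sqrt_eq_rpow, Real.sq_sqrt hi.le]
  have hG : ∀ᶠ i in (l:Filter ℕ), eval (z i) (gsq f) ≤ τ i * t i / 4 := by
    filter_upwards [hbad, hts.1, hl (eventually_ge_atTop 3)] with i h1 h2 h3
    have h3' : (3:ℝ) ≤ i := by exact_mod_cast h3
    have h4 : (t i) ^ (2 * th k (m+1)) = t i ^ s * t i := by
      rw [hs, Real.rpow_sub_one h2.ne']; field_simp
    have h4' : eval (z i) f ^ (2 * th k (m+1)) = t i ^ s * t i := h4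
    rw [h4'] at h1
    have h5 : τ i * ((i:ℝ)+1) = t i ^ s := by simp only [hτd]; field_simp
    have h6 : 0 < t i ^ s := Real.rpow_pos_of_pos h2 s
    rw [← h5] at h1 h6
    have h7 : 0 < τ i := by
      by_contra h; push Not at h; nlinarith
    have h8 : eval (z i) (gsq f) * ((i:ℝ)+1) ≤ τ i * t i := by
      refine le_of_mul_le_mul_right (a := (i:ℝ)+1) ?_ (by linarith)
      linarith [h1]
    have h9 := gsq_nonneg f (z i)
    nlinarith
  have hzb : ∀ᶠ i in (l:Filter ℕ), dist (z i) x0 ≤ r :=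
    (hz.eventually (Metric.ball_mem_nhds x0 hr)).mono fun i h => le_of_lt h
  have hτsmall : ∀ᶠ i in (l:Filter ℕ), τ i < 1/(4*((m:ℝ)+1)) := hτ.2.eventually (gt_mem_nhds (by positivity))
  have hmax := maximizer hk hA f hf x0 r hr hr1 hNC z hzb t (fun _ => rfl) hts τ hτ hG hτo
  have hζgen : ∀ ζ : ℕ → Fin (m+1) → ℝ, (∀ᶠ i in (l:Filter ℕ), ∀ j, |ζ i j| ≤ τ i ^ 4) →
      ∀ᶠ i in (l:Filter ℕ), 2 * ∑ j, |ζ i j| ≤ τ i * t i / 2 := by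
    intro ζ hζ
    filter_upwards [hζ, hτpos, hτ2, hτsmall] with i h1 h2 h3 h4
    have h5 : ∑ j, |ζ i j| ≤ ((m:ℝ)+1) * τ i ^ 4 := by
      refine (Finset.sum_le_sum fun j _ => h1 j).trans (le_of_eq ?_)
      simp
    rw [lt_div_iff₀ (by positivity)] at h4
    have h6 : τ i * (4*((m:ℝ)+1)) * τ i ^ 3 ≤ 1 * τ i ^ 3 := mul_le_mul_of_nonneg_right h4.le (by positivity)
    have h7 : τ i * τ i ^ 2 ≤ τ i * t i := mul_le_mul_of_nonneg_left h3 h2.le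
    nlinarith
  by_cases hm : m = 1
  · subst hm
    set J : MvPolynomial (Fin 2) ℝ := pderiv 0 (gsq f) * pderiv 1 f - pderiv 1 (gsq f) * pderiv 0 f with hJ
    have hd0 : ∀ j, (pderiv j f).totalDegree ≤ k - 1 := fun j => (totalDegree_pderiv_le' j f).trans (by omega)
    have hdG : ∀ j, (pderiv j (gsq f)).totalDegree ≤ 2*k-3 := fun j =>
      (totalDegree_pderiv_le' j (gsq f)).trans (by have := totalDegree_gsq_le f hf; omega)
    have hJd : J.totalDegree ≤ 3*k-4 := by
      refine (totalDegree_sub _ _).trans (max_le ?_ ?_)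
      · refine (totalDegree_mul _ _).trans ?_
        have := hd0 1; have := hdG 0; omega
      · refine (totalDegree_mul _ _).trans ?_
        have := hd0 0; have := hdG 1; omega
    by_cases hJ0 : J = 0
    · obtain ⟨j, hj⟩ : ∃ j, pderiv j f ≠ 0 := by
        by_contra hcon
        push Not at hcon
        have hg0 : gsq f = 0 := by simp [gsq, hcon]
        obtain ⟨i, h1, h2⟩ := (hzb.and hpos).exists
        have := hNC (z i) h1 (by rw [hg0]; simp)
        linarith
      let ζ : ℕ → Fin 2 → ℝ := fun i q => if q = j then 0 else τ i ^ 4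
      obtain ⟨x, xl, hxl, hlow, hfs, hGO, hGo, hcr⟩ := hmax ζ (hζgen ζ (by
        filter_upwards [hτpos] with i hi q
        simp only [ζ]
        split_ifs
        · simp; positivity
        · rw [abs_of_pos (by positivity)]))
      refine twoCase hk f (pderiv j f) hf ((hd0 j).trans (by omega)) hj x xl hxl hfs hGo ?_
      filter_upwards [hcr, hτpos] with i h1 h2
      have e1 := h1 0
      have e2 := h1 1
      have e3 : eval (x i) J = 0 := by rw [hJ0]; simp
      simp only [hJ, map_sub, map_mul] at e3
      have h4 : τ i ^ 4 ≠ 0 := by positivity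
      have e4 : ζ i 1 * eval (x i) (pderiv 0 f) - ζ i 0 * eval (x i) (pderiv 1 f) = 0 := by
        rw [← e1, ← e2]; linear_combination e3
      fin_cases j
      · simpa [ζ, h4, h2.ne'] using e4
      · simpa [ζ, h4, h2.ne'] using e4
    · obtain ⟨x, xl, hxl, hlow, hfs, hGO, hGo, hcr⟩ := hmax (fun _ _ => 0) (hζgen _ (by
        filter_upwards [hτpos] with i hi q
        simp; positivity))
      refine twoCase hk f J hf hJd hJ0 x xl hxl hfs hGo ?_
      filter_upwards [hcr] with i h1
      have e1 := h1 0
      have e2 := h1 1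
      simp only [hJ, map_sub, map_mul]
      linear_combination (-eval (x i) (pderiv 1 f)) * e1 + eval (x i) (pderiv 0 f) * e2
  · let ζ : ℕ → Fin (m+1) → ℝ := fun i j => τ i ^ (i ^ ((j:ℕ)+1))
    obtain ⟨x, xl, hxl, hlow, hfs, hGO, hGo, hcr⟩ := hmax ζ (hζgen ζ (by
      filter_upwards [superdecay hl hτ (m+1) 4] with i h1 j
      rw [abs_of_pos (h1 j).1]; exact (h1 j).2))
    refine genericCase hk hm f hf hl τ hτ x xl hxl ?_ hfs hGO hGo hcr
    filter_upwards [hlow, hτ2] with i h1 h2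
    linarith

lemma gsq_neg {n : ℕ} (f : MvPolynomial (Fin n) ℝ) : gsq (-f) = gsq f := by simp [gsq]

lemma LojA_succ {k m : ℕ} (hk : 2 ≤ k) (hA : LojA k m) : LojA k (m+1) := by
  intro f hf x0 hx0
  by_contra hcon
  push Not at hcon
  have h1 : ∀ i : ℕ, ∃ z, dist z x0 < 1/((i:ℝ)+1) ∧
      eval z (gsq f) < 1/((i:ℝ)+1)^2 * |eval z f| ^ (2 * th k (m+1)) := fun i =>
    hcon (1/((i:ℝ)+1)^2) (by positivity) (1/((i:ℝ)+1)) (by positivity)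
  choose z hz1 hz2 using h1
  have hzt : Tendsto z atTop (𝓝 x0) := by
    rw [tendsto_iff_dist_tendsto_zero]
    exact squeeze_zero (fun _ => dist_nonneg) (fun i => (hz1 i).le) tendsto_one_div_add_atTop_nhds_zero_nat
  have hbad : ∀ i : ℕ, eval (z i) (gsq f) * ((i:ℝ)+1)^2 ≤ |eval (z i) f| ^ (2 * th k (m+1)) := by
    intro i
    have h := (hz2 i).le
    rwa [one_div_mul_eq_div, le_div_iff₀ (by positivity)] at h
  have hne : ∀ i, eval (z i) f ≠ 0 := by
    intro i h0
    have h := hz2 i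
    rw [h0, abs_zero, Real.zero_rpow (by have := th_ge hk (m+1); linarith), mul_zero] at h
    exact absurd (gsq_nonneg f (z i)) (not_le.2 h)
  set l : Ultrafilter ℕ := hyperfilter ℕ with hl_def
  have hl : (l:Filter ℕ) ≤ atTop := Nat.hyperfilter_le_atTop
  have hor : ∀ᶠ i in (l:Filter ℕ), 0 < eval (z i) f ∨ eval (z i) f < 0 :=
    Eventually.of_forall fun i => (hne i).symm.lt_or_gt
  rcases Ultrafilter.eventually_or.1 hor with h | h
  · refine mainLemma hk hA f hf x0 hx0 hl z (hzt.mono_left hl) h ?_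
    filter_upwards [h] with i hi
    have := hbad i
    rwa [abs_of_pos hi] at this
  · refine mainLemma hk hA (-f) (by rwa [totalDegree_neg]) x0 (by simp [hx0]) hl z (hzt.mono_left hl) ?_ ?_
    · filter_upwards [h] with i hi
      simpa using hi
    · filter_upwards [h] with i hi
      have := hbad i
      rw [abs_of_neg hi] at this
      rw [gsq_neg]; simpa using this

theorem LojA_all {k : ℕ} (hk : 2 ≤ k) (n : ℕ) : LojA k n := by
  induction n with
  | zero => exact LojA_zero hk
  | succ m ih => exact LojA_succ hk ih
end

section
open MvPolynomial

def polyGrad {d : ℕ} (q : MvPolynomial (Fin d) ℝ) (y : Euc d) : Euc d :=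
  WithLp.toLp 2 (fun j => eval (fun j => y j) (pderiv j q))

lemma hasGradientAt_poly {d : ℕ} (q : MvPolynomial (Fin d) ℝ) (y : Euc d) :
    HasGradientAt (fun y : Euc d => eval (fun j => y j) q) (polyGrad q y) y := by
  rw [hasGradientAt_iff_hasFDerivAt]
  have h1 := (hasFDerivAt_eval q (fun j => y j))
  have h2 : HasFDerivAt (fun y : Euc d => (fun j => y j : Fin d → ℝ))
      ((EuclideanSpace.equiv (Fin d) ℝ : Euc d →L[ℝ] (Fin d → ℝ))) y :=
    (EuclideanSpace.equiv (Fin d) ℝ : Euc d →L[ℝ] (Fin d → ℝ)).hasFDerivAt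
  have h3 := HasFDerivAt.comp y h1 h2
  refine h3.congr_fderiv ?_
  ext v
  simp [polyGrad, PiLp.inner_apply, mul_comm]

lemma norm_polyGrad_sq {d : ℕ} (q : MvPolynomial (Fin d) ℝ) (y : Euc d) :
    ‖polyGrad q y‖ ^ 2 = eval (fun j => y j) (gsq q) := by
  rw [EuclideanSpace.norm_sq_eq, eval_gsq]
  simp [polyGrad]

lemma continuous_coords (d : ℕ) : Continuous (fun y : Euc d => (fun j => y j : Fin d → ℝ)) := by
  fun_prop

lemma continuous_polyGrad {d : ℕ} (q : MvPolynomial (Fin d) ℝ) : Continuous (polyGrad q) := by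
  unfold polyGrad
  refine (PiLp.continuous_toLp 2 _).comp (continuous_pi fun j => (continuous_evalx _).comp (continuous_coords d))

lemma piecewise_loja {d k : ℕ} (hk : 2 ≤ k) {ι : Type*} [Finite ι] (F : Euc d → ℝ) (hF : ContDiff ℝ 1 F)
    (A : ι → Set (Euc d)) (hA : (⋃ l, A l) = univ) (q : ι → MvPolynomial (Fin d) ℝ)
    (hq : ∀ l, (q l).totalDegree ≤ k) (hFq : ∀ l, ∀ y ∈ A l, F y = eval (fun j => y j) (q l)) (ybar : Euc d) :
    ∃ c : ℝ, 0 < c ∧ ∃ ε : ℝ, 0 < ε ∧ ∀ z : Euc d, ‖ybar - z‖ < ε → 0 ≤ F ybar - F z →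
      ‖gradient F z‖ ≥ c * (F ybar - F z) ^ th k d := by
  have hFc : Continuous F := hF.continuous
  have hFg : Continuous (gradient F) := by
    have h1 := hF.continuous_fderiv (by norm_num)
    exact (InnerProductSpace.toDual ℝ (Euc d)).symm.continuous.comp h1
  have hpc : ∀ l, Continuous (fun y : Euc d => eval (fun j => y j) (q l)) := fun l =>
    (continuous_evalx (q l)).comp (continuous_coords d)
  have hB : ∀ l, ∀ y ∈ closure (A l), F y = eval (fun j => y j) (q l) := fun l =>
    closure_minimal (s := A l) (t := {y | F y = eval (fun j => y j) (q l)}) (hFq l) (isClosed_eq hFc (hpc l))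
  set V : ι → Set (Euc d) := fun l => closure (interior (closure (A l))) with hV
  have hVcov : ∀ y, ∃ l, y ∈ V l := by
    have h1 : Dense (⋃ l, interior (closure (A l))) := by
      refine dense_iUnion_interior_of_closed (fun l => isClosed_closure) ?_
      refine eq_univ_of_univ_subset ?_
      rw [← hA]
      exact iUnion_mono fun l => subset_closure
    intro y
    have h2 := h1 y
    rw [closure_iUnion_of_finite] at h2
    exact mem_iUnion.1 h2
  have hVF : ∀ l, ∀ y ∈ V l, F y = eval (fun j => y j) (q l) := fun l y hy =>
    hB l y (closure_minimal interior_subset isClosed_closure hy)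
  have hVG : ∀ l, ∀ y ∈ V l, gradient F y = polyGrad (q l) y := by
    intro l
    refine closure_minimal (t := {y | gradient F y = polyGrad (q l) y}) ?_ (isClosed_eq hFg (continuous_polyGrad _))
    intro y hy
    have h1 : F =ᶠ[𝓝 y] fun y => eval (fun j => y j) (q l) := by
      filter_upwards [isOpen_interior.mem_nhds hy] with w hw
      exact hB l w (interior_subset hw)
    exact ((hasGradientAt_poly (q l) y).congr_of_eventuallyEq h1).gradient
  have hloc : ∀ l, ∃ c : ℝ, 0 < c ∧ ∃ ε : ℝ, 0 < ε ∧ ∀ z ∈ V l, ‖ybar - z‖ < ε → 0 ≤ F ybar - F z →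
      ‖gradient F z‖ ≥ c * (F ybar - F z) ^ th k d := by
    intro l
    by_cases hy : ybar ∈ V l
    · have hdeg : (q l - C (F ybar)).totalDegree ≤ k := by
        refine (totalDegree_sub _ _).trans (max_le (hq l) (by rw [totalDegree_C]; omega))
      obtain ⟨c, hc, ε, hε, H⟩ := LojA_all hk d (q l - C (F ybar)) hdeg (fun j => ybar j) (by simp [hVF l ybar hy])
      refine ⟨Real.sqrt c, Real.sqrt_pos.2 hc, ε, hε, fun z hz hd h0 => ?_⟩
      have h1 := H (fun j => z j) (by
        rw [dist_pi_lt_iff hε]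
        intro j
        refine lt_of_le_of_lt ?_ hd
        rw [dist_comm]
        have := PiLp.norm_apply_le (ybar - z) j
        simpa [dist_eq_norm] using this)
      have h2 : gsq (q l - C (F ybar)) = gsq (q l) := by simp [gsq]
      rw [h2, ← norm_polyGrad_sq, ← hVG l z hz] at h1
      have h3 : |eval (fun j => z j) (q l - C (F ybar))| = F ybar - F z := by
        rw [map_sub, eval_C, ← hVF l z hz, abs_sub_comm, abs_of_nonneg h0]
      rw [h3] at h1
      refine (le_abs_self _).trans (abs_le_of_sq_le_sq ?_ (norm_nonneg _))
      rw [mul_pow, Real.sq_sqrt hc.le]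
      refine le_trans (le_of_eq ?_) h1
      rw [← Real.rpow_natCast, ← Real.rpow_mul h0]
      congr 2
      push_cast; ring
    · have h1 : (V l)ᶜ ∈ 𝓝 ybar := (isClosed_closure.isOpen_compl).mem_nhds hy
      obtain ⟨ε, hε, h2⟩ := Metric.mem_nhds_iff.1 h1
      refine ⟨1, one_pos, ε, hε, fun z hz hd => ?_⟩
      exact absurd hz (h2 (by rw [Metric.mem_ball, dist_comm, dist_eq_norm]; exact hd))
  choose c hc ε hε H using hloc
  obtain ⟨l0, _⟩ := hVcov ybar
  have : Nonempty ι := ⟨l0⟩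
  obtain ⟨lc, hlc⟩ := Finite.exists_min c
  obtain ⟨le, hle⟩ := Finite.exists_min ε
  refine ⟨c lc, hc lc, ε le, hε le, fun z hz h0 => ?_⟩
  obtain ⟨l, hl⟩ := hVcov z
  have h1 := H l z hl (hz.trans_le (hle l)) h0
  refine le_trans ?_ h1
  exact mul_le_mul_of_nonneg_right (hlc l) (Real.rpow_nonneg h0 _)
end

/-- Bound of the Łojasiewicz exponent for piecewise polynomial kernels:
if the kernel `K` is `C¹` and piecewise polynomial with maximum degree `k ≥ 2` (partition
`{S l}` with polynomials `p l`, degree `k` attained), `ȳ` is a critical point of the KDE `f`,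
and `{T m}` is a finite partition with polynomials `fp m` such that `f = fp m` on `T m` and
every `fp m` whose piece `T m` meets every `ε`-neighborhood of `ȳ` is non-constant, then `f`
satisfies the Łojasiewicz inequality at `ȳ` with exponent
`θ = 1 − 1/max{k(3k−4)^{d−1}, 2k(3k−3)^{d−2}}`. -/
theorem loja_exponent_bound_piecewise_poly
    (d n : ℕ) (hd : 0 < d) (hn : 0 < n)
    (K : Euc d → ℝ) (x : Fin n → Euc d) (h : ℝ) (hh : 0 < h)
    (hK1 : ContDiff ℝ 1 K)
    (k L : ℕ) (hk : 2 ≤ k)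
    (S : Fin L → Set (Euc d)) (p : Fin L → MvPolynomial (Fin d) ℝ)
    (hSne : ∀ l, (S l).Nonempty)
    (hSdisj : ∀ l l', l ≠ l' → Disjoint (S l) (S l'))
    (hScover : (⋃ l, S l) = Set.univ)
    (hagree : ∀ l, ∀ z ∈ S l, K z = MvPolynomial.eval (fun j => z j) (p l))
    (hdeg : ∀ l, (p l).totalDegree ≤ k)
    (hdeg_attained : ∃ l, (p l).totalDegree = k)
    (ybar : Euc d) (hcrit : gradient (KDE d n K x h) ybar = 0)
    (M : ℕ) (T : Fin M → Set (Euc d)) (fp : Fin M → MvPolynomial (Fin d) ℝ)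
    (hTne : ∀ m, (T m).Nonempty)
    (hTdisj : ∀ m m', m ≠ m' → Disjoint (T m) (T m'))
    (hTcover : (⋃ m, T m) = Set.univ)
    (hTagree : ∀ m, ∀ z ∈ T m, KDE d n K x h z = MvPolynomial.eval (fun j => z j) (fp m))
    (hnonconst : ∀ m, (∀ ε : ℝ, 0 < ε → (T m ∩ Metric.ball ybar ε).Nonempty) →
        ¬ ∃ c : ℝ, ∀ z : Fin d → ℝ, MvPolynomial.eval z (fp m) = c) :
    ∃ c : ℝ, 0 < c ∧ ∃ ε : ℝ, 0 < ε ∧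
      ∀ z : Euc d, ‖ybar - z‖ < ε → 0 ≤ KDE d n K x h ybar - KDE d n K x h z →
        ‖gradient (KDE d n K x h) z‖ ≥
          c * (KDE d n K x h ybar - KDE d n K x h z) ^
            (1 - 1 / ((max (k * (3 * k - 4) ^ (d - 1)) (2 * k * (3 * k - 3) ^ (d - 2)) : ℕ) : ℝ)) := by
  have hKc : ContDiff ℝ 1 (KDE d n K x h) := by
    unfold KDE
    fun_prop
  let φ : Fin n → Fin d → MvPolynomial (Fin d) ℝ := fun i j =>
    MvPolynomial.C h⁻¹ * (MvPolynomial.X j - MvPolynomial.C (x i j))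
  have hφ : ∀ i j, (φ i j).totalDegree ≤ 1 := by
    intro i j
    refine (MvPolynomial.totalDegree_mul _ _).trans ?_
    rw [MvPolynomial.totalDegree_C, zero_add]
    refine (MvPolynomial.totalDegree_sub _ _).trans (max_le ?_ ?_)
    · rw [MvPolynomial.totalDegree_X]
    · rw [MvPolynomial.totalDegree_C]; omega
  let q : (Fin n → Fin L) → MvPolynomial (Fin d) ℝ := fun s =>
    MvPolynomial.C (1 / ((n : ℝ) * h ^ d)) * ∑ i, MvPolynomial.aeval (φ i) (p (s i))
  have hq : ∀ s, (q s).totalDegree ≤ k := by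
    intro s
    refine (MvPolynomial.totalDegree_mul _ _).trans ?_
    rw [MvPolynomial.totalDegree_C, zero_add]
    refine MvPolynomial.totalDegree_finsetSum_le fun i _ => ?_
    exact (totalDegree_aeval_le (φ i) (hφ i) _).trans (hdeg _)
  refine piecewise_loja hk (ι := Fin n → Fin L) (KDE d n K x h) hKc
    (fun s => {y | ∀ i, h⁻¹ • (y - x i) ∈ S (s i)}) ?_ q hq ?_ ybar
  · refine Set.eq_univ_of_forall fun y => ?_
    have h1 : ∀ i, ∃ l, h⁻¹ • (y - x i) ∈ S l := by
      intro i
      have h2 : h⁻¹ • (y - x i) ∈ ⋃ l, S l := by rw [hScover]; trivial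
      exact Set.mem_iUnion.1 h2
    choose s hs using h1
    exact Set.mem_iUnion.2 ⟨s, hs⟩
  · intro s y hy
    simp only [q, KDE, map_mul, MvPolynomial.eval_C, map_sum]
    congr 1
    refine Finset.sum_congr rfl fun i _ => ?_
    rw [hagree (s i) _ (hy i)]
    generalize p (s i) = P
    induction P using MvPolynomial.induction_on with
    | C a => simp
    | add P Q hP hQ => rw [map_add, map_add, map_add, hP, hQ]
    | mul_X P j hP =>
      rw [map_mul, map_mul, map_mul, hP, MvPolynomial.aeval_X, MvPolynomial.eval_X]
      simp [φ]
end
end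

section
/- (One-step length estimate from the Łojasiewicz inequality.) Let f : ℝ^d → ℝ, let y_{t−1}, y_t, y_{t+1}, ȳ ∈ ℝ^d, and let δ ∈ (0,∞], ā > 0, c̄ > 0. Let φ : [0,δ) → [0,∞) be continuous and concave with φ(0) = 0, continuously differentiable on (0,δ) with φ' > 0 (hence φ' non-increasing). Set r_t := f(ȳ) − f(y_t) and r_{t+1} := f(ȳ) − f(y_{t+1}), and assume: 0 < r_{t+1} ≤ r_t < δ; f is differentiable at y_t; f(y_{t+1}) − f(y_t) ≥ ā·‖y_{t+1} − y_t‖²; ‖y_t − y_{t−1}‖ ≥ c̄·‖∇f(y_t)‖; and the Łojasiewicz inequality φ'(r_t)·‖∇f(y_t)‖ ≥ 1 holds. Then 2‖y_{t+1} − y_t‖ ≤ ‖y_t − y_{t−1}‖ + (1/(ā·c̄))·(φ(r_t) − φ(r_{t+1})). -/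
open Set Filter Topology MeasureTheory
open scoped BigOperators RealInnerProductSpace

noncomputable section

/-- One-step length estimate from the Łojasiewicz inequality:
with a desingularizing function `φ` on `[0, δ)` (`δ ∈ (0,∞]`, encoded as `δ : ℝ≥0∞`), if
`r_{t} := f(ȳ) − f(y_t)` and `r_{t+1} := f(ȳ) − f(y_{t+1})` satisfy `0 < r_{t+1} ≤ r_t < δ`,
`f` is differentiable at `y_t`, the sufficient increase condition
`f(y_{t+1}) − f(y_t) ≥ ā‖y_{t+1} − y_t‖²` and the relative error condition
`‖y_t − y_{t−1}‖ ≥ c̄‖∇f(y_t)‖` hold, and the Łojasiewicz inequality `φ'(r_t)‖∇f(y_t)‖ ≥ 1`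
holds, then `2‖y_{t+1} − y_t‖ ≤ ‖y_t − y_{t−1}‖ + (1/(ā c̄))(φ(r_t) − φ(r_{t+1}))`. -/
theorem ms_one_step_length_estimate
    (d : ℕ) (f : Euc d → ℝ)
    (ytm ytc ytp ybar : Euc d)  -- y_{t-1}, y_t, y_{t+1}, and ȳ
    (δ : ENNReal) (hδ : 0 < δ)
    (abar cbar : ℝ) (habar : 0 < abar) (hcbar : 0 < cbar)
    (φ φ' : ℝ → ℝ)
    (hφcont : ContinuousOn φ {u : ℝ | 0 ≤ u ∧ ENNReal.ofReal u < δ})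
    (hφnonneg : ∀ u : ℝ, 0 ≤ u → ENNReal.ofReal u < δ → 0 ≤ φ u)
    (hφconc : ConcaveOn ℝ {u : ℝ | 0 ≤ u ∧ ENNReal.ofReal u < δ} φ)
    (hφ0 : φ 0 = 0)
    (hφderiv : ∀ u : ℝ, 0 < u → ENNReal.ofReal u < δ → HasDerivAt φ (φ' u) u)
    (hφ'cont : ContinuousOn φ' {u : ℝ | 0 < u ∧ ENNReal.ofReal u < δ})
    (hφ'pos : ∀ u : ℝ, 0 < u → ENNReal.ofReal u < δ → 0 < φ' u)
    (hr_pos : 0 < f ybar - f ytp)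
    (hr_mono : f ybar - f ytp ≤ f ybar - f ytc)
    (hr_lt : ENNReal.ofReal (f ybar - f ytc) < δ)
    (hdiff : DifferentiableAt ℝ f ytc)
    (hsuff : f ytp - f ytc ≥ abar * ‖ytp - ytc‖ ^ 2)
    (hrel : ‖ytc - ytm‖ ≥ cbar * ‖gradient f ytc‖)
    (hloja : φ' (f ybar - f ytc) * ‖gradient f ytc‖ ≥ 1) :
    2 * ‖ytp - ytc‖ ≤ ‖ytc - ytm‖ +
      1 / (abar * cbar) * (φ (f ybar - f ytc) - φ (f ybar - f ytp)) := by
  have hslope : φ' (f ybar - f ytc) * ((f ybar - f ytc) - (f ybar - f ytp)) ≤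
      φ (f ybar - f ytc) - φ (f ybar - f ytp) := by
    rcases hr_mono.eq_or_lt with h | h
    · rw [h]; simp
    · have h1 := hφconc.le_slope_of_hasDerivAt
        ⟨hr_pos.le, (ENNReal.ofReal_le_ofReal hr_mono).trans_lt hr_lt⟩
        ⟨(hr_pos.trans h).le, hr_lt⟩ h (hφderiv _ (hr_pos.trans h) hr_lt)
      rw [slope_def_field, le_div_iff₀ (by linarith)] at h1
      exact h1
  have hP := hφ'pos _ (hr_pos.trans_le hr_mono) hr_lt
  generalize φ' (f ybar - f ytc) = P at *
  generalize φ (f ybar - f ytc) - φ (f ybar - f ytp) = Q at *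
  have hs : 0 ≤ ‖ytp - ytc‖ := norm_nonneg _
  generalize ‖ytp - ytc‖ = s at *
  generalize ‖ytc - ytm‖ = D at *
  generalize ‖gradient f ytc‖ = g at *
  have hQ : P * (abar * s ^ 2) ≤ Q :=
    (mul_le_mul_of_nonneg_left (by linarith) hP.le).trans hslope
  have hPD : cbar ≤ P * D := by
    have h1 := mul_le_mul_of_nonneg_left hrel hP.le
    have h2 := mul_le_mul_of_nonneg_left hloja hcbar.le
    nlinarith
  have hD : 0 < D := pos_of_mul_pos_right (hcbar.trans_le hPD) hP.le
  have hE : s ^ 2 / D ≤ 1 / (abar * cbar) * Q := by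
    rw [one_div_mul_eq_div, div_le_div_iff₀ hD (by positivity)]
    have h1 := mul_le_mul_of_nonneg_right hQ hD.le
    have h2 := mul_le_mul_of_nonneg_left hPD (show 0 ≤ abar * s ^ 2 by positivity)
    nlinarith
  have hF : 2 * s ≤ D + s ^ 2 / D := by
    have : D + s ^ 2 / D - 2 * s = (D - s) ^ 2 / D := by field_simp; ring
    have : 0 ≤ (D - s) ^ 2 / D := by positivity
    linarith
  linarith
end
end

section
/- (A C^∞ function too flat to satisfy any Łojasiewicz inequality.) Let d ≥ 1, β > 0, x' ∈ ℝ^d, and define g : ℝ^d → ℝ by g(x) = −exp(−‖x − x'‖^{−β}) for x ≠ x' and g(x') = 0. Then g is differentiable with ‖∇g(x)‖ = β·exp(−‖x − x'‖^{−β})·‖x − x'‖^{−β−1} for x ≠ x' and ∇g(x') = 0, and g does not have the Łojasiewicz property at x': for every θ ∈ [0,1), every c > 0, and every ε > 0 there exists x with 0 < ‖x − x'‖ < ε such that ‖∇g(x)‖ < c·(g(x') − g(x))^θ. -/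
open Set Filter Topology MeasureTheory
open scoped BigOperators RealInnerProductSpace

noncomputable section

theorem too_flat_limit (β : ℝ) (hβ : 0 < β) (s b : ℝ) (hb : 0 < b) (ε : ℝ) (hε : 0 < ε) :
    ∃ δ > (0:ℝ), ∀ r : ℝ, 0 < r → r < δ → r ^ s * Real.exp (-b * r ^ (-β)) < ε := by
  have h1 := tendsto_rpow_mul_exp_neg_mul_atTop_nhds_zero (-s / β) b hb
  have h2 : ∀ᶠ y : ℝ in atTop, y ^ (-s / β) * Real.exp (-b * y) < ε :=
    h1.eventually_lt_const hε
  obtain ⟨A, hA⟩ := eventually_atTop.1 h2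
  have hM : 0 < max A 1 := by positivity
  refine ⟨(max A 1) ^ (-1 / β), by positivity, fun r hr hrd => ?_⟩
  have h3 : max A 1 ≤ r ^ (-β) := by
    have := Real.rpow_le_rpow_of_nonpos hr hrd.le (neg_nonpos.2 hβ.le)
    rw [← Real.rpow_mul hM.le] at this
    have e : -1 / β * -β = 1 := by field_simp
    rwa [e, Real.rpow_one] at this
  have h4 := hA _ ((le_max_left _ _).trans h3)
  rw [← Real.rpow_mul hr.le] at h4
  have e : -β * (-s / β) = s := by field_simp
  rwa [e] at h4

/-- A `C^∞` function too flat to satisfy any Łojasiewicz inequality: for `d ≥ 1`,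
`β > 0`, the function `g(x) = −exp(−‖x − x'‖^{−β})` (with `g(x') = 0`) is differentiable, its
gradient has norm `β·exp(−‖x−x'‖^{−β})·‖x−x'‖^{−β−1}` away from `x'` and vanishes at `x'`, and
`g` does not have the Łojasiewicz property at `x'`: for every `θ ∈ [0,1)`, `c > 0`, `ε > 0`
there is `x` with `0 < ‖x − x'‖ < ε` and `‖∇g(x)‖ < c·(g(x') − g(x))^θ`. -/
theorem too_flat_no_lojasiewicz
    (d : ℕ) (hd : 1 ≤ d) (β : ℝ) (hβ : 0 < β) (x' : Euc d)
    (g : Euc d → ℝ)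
    (hg : ∀ x : Euc d, x ≠ x' → g x = -Real.exp (-‖x - x'‖ ^ (-β)))
    (hg0 : g x' = 0) :
    Differentiable ℝ g ∧
    (∀ x : Euc d, x ≠ x' →
      ‖gradient g x‖ = β * Real.exp (-‖x - x'‖ ^ (-β)) * ‖x - x'‖ ^ (-β - 1)) ∧
    gradient g x' = 0 ∧
    ∀ θ : ℝ, θ ∈ Set.Ico (0:ℝ) 1 → ∀ c : ℝ, 0 < c → ∀ ε : ℝ, 0 < ε →
      ∃ x : Euc d, 0 < ‖x - x'‖ ∧ ‖x - x'‖ < ε ∧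
        ‖gradient g x‖ < c * (g x' - g x) ^ θ := by
  have key := too_flat_limit β hβ
  have hpos : ∀ x : Euc d, x ≠ x' → 0 < ‖x - x'‖ := fun x hx =>
    norm_pos_iff.2 (sub_ne_zero.2 hx)
  have hG : ∀ x : Euc d, x ≠ x' → HasGradientAt g
      ((-(Real.exp (-‖x - x'‖ ^ (-β)) * β * ‖x - x'‖ ^ (-β - 2))) • (x - x')) x := by
    intro x hx
    have hr := hpos x hx
    have hs : (‖x - x'‖ ^ 2) ≠ 0 := by positivity
    have hphi : HasDerivAt (fun s : ℝ => -Real.exp (-s ^ (-β / 2)))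
        (-(Real.exp (-(‖x - x'‖ ^ 2) ^ (-β / 2)) *
          (-((-β / 2) * (‖x - x'‖ ^ 2) ^ (-β / 2 - 1))))) (‖x - x'‖ ^ 2) :=
      ((Real.hasDerivAt_rpow_const (Or.inl hs)).neg.exp).neg
    have hn : HasFDerivAt (fun y : Euc d => ‖y - x'‖ ^ 2)
        (2 • (innerSL ℝ (x - x'))) x := by
      have h1 := (hasStrictFDerivAt_norm_sq (x - x')).hasFDerivAt
      have h2 : HasFDerivAt (fun y : Euc d => y - x') (ContinuousLinearMap.id ℝ (Euc d)) x :=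
        (hasFDerivAt_id x).sub_const x'
      have := h1.comp x h2
      simpa [Function.comp_def] using this
    have hc := hphi.comp_hasFDerivAt x hn
    have e1 : ∀ y : Euc d, ∀ p : ℝ, (‖y - x'‖ ^ 2) ^ p = ‖y - x'‖ ^ (2 * p) := by
      intro y p
      rw [Real.rpow_mul (norm_nonneg _), Real.rpow_two]
    have heq : g =ᶠ[𝓝 x] ((fun s : ℝ => -Real.exp (-s ^ (-β / 2))) ∘
        (fun y : Euc d => ‖y - x'‖ ^ 2)) := by
      filter_upwards [isOpen_ne.mem_nhds hx] with y hy
      rw [hg y hy]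
      simp only [Function.comp, e1]
      congr 4
      ring
    have hc2 := hc.congr_of_eventuallyEq heq
    rw [hasGradientAt_iff_hasFDerivAt]
    refine hc2.congr_fderiv ?_
    ext v
    simp only [e1]
    have e2 : 2 * (-β / 2) = -β := by ring
    have e3 : 2 * (-β / 2 - 1) = -β - 2 := by ring
    rw [e2, e3]
    simp [inner_smul_left]
    ring
  have hN : ∀ x : Euc d, x ≠ x' →
      ‖gradient g x‖ = β * Real.exp (-‖x - x'‖ ^ (-β)) * ‖x - x'‖ ^ (-β - 1) := by
    intro x hx
    have hr := hpos x hx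
    rw [(hG x hx).gradient, norm_smul, norm_neg, Real.norm_of_nonneg (by positivity)]
    have : ‖x - x'‖ ^ (-β - 1) = ‖x - x'‖ ^ (-β - 2) * ‖x - x'‖ := by
      rw [← Real.rpow_add_one hr.ne']
      congr 1
      ring
    rw [this]
    ring
  have hG0 : HasGradientAt g 0 x' := by
    rw [hasGradientAt_iff_hasFDerivAt, hasFDerivAt_iff_tendsto, Metric.tendsto_nhds_nhds]
    intro ε hε
    obtain ⟨δ, hδ, h⟩ := key (-1) 1 one_pos ε hε
    refine ⟨δ, hδ, fun {x} hx => ?_⟩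
    rcases eq_or_ne x x' with rfl | hne
    · simpa using hε
    · have hr := hpos x hne
      rw [dist_eq_norm] at hx
      have := h _ hr hx
      rw [hg x hne, hg0]
      simpa [Real.rpow_neg_one, abs_of_pos hr, Real.abs_exp] using this
  refine ⟨?_, hN, hG0.gradient, ?_⟩
  · intro x
    rcases eq_or_ne x x' with rfl | hne
    · exact hG0.differentiableAt
    · exact (hG x hne).differentiableAt
  · intro θ hθ c hc ε hε
    obtain ⟨δ, hδ, h⟩ := key (-β - 1) (1 - θ) (by linarith [hθ.2]) (c / β) (by positivity)
    set r := min δ ε / 2 with hrdef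
    have hm : 0 < min δ ε := lt_min hδ hε
    have hr : 0 < r := by positivity
    have hrm : r < min δ ε := by linarith
    let x : Euc d := x' + EuclideanSpace.single (⟨0, hd⟩ : Fin d) r
    have hxr : ‖x - x'‖ = r := by simp [x, abs_of_pos hr]
    have hne : x ≠ x' := by
      intro h0
      rw [h0, sub_self, norm_zero] at hxr
      linarith
    refine ⟨x, by rw [hxr]; exact hr, by rw [hxr]; exact hrm.trans_le (min_le_right _ _), ?_⟩
    rw [hN x hne, hg x hne, hg0, hxr, zero_sub, neg_neg, ← Real.exp_mul]
    have h3 := h r hr (hrm.trans_le (min_le_left _ _))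
    rw [lt_div_iff₀ hβ] at h3
    have h4 : Real.exp (-r ^ (-β)) =
        Real.exp (-(1 - θ) * r ^ (-β)) * Real.exp (-r ^ (-β) * θ) := by
      rw [← Real.exp_add]
      congr 1
      ring
    rw [h4]
    have h5 := mul_lt_mul_of_pos_right h3 (Real.exp_pos (-r ^ (-β) * θ))
    linarith
end
end
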